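/- arXiv:2311.10379 — 2 statements merged into one kernel-verified Lean document; each statement's English description precedes it below -/
import Mathlib

section
/- For the sequence r_e = 2^{2(2e+1)} (e = 1, 2, 3, ...), one has f(r_e, {C₄, C₆}) = (1 + o(1))·√(r_e); that is, f(r_e, {C₄, C₆}) / 2^{2e+1} tends to 1 as e tends to infinity. -/
/-- A complete partition of a graph `G` into `r` parts, encoded as a coloring
`c : V → Fin r` such that between any two distinct color classes there is an edge. -/
def IsCompletePartition {V : Type*} (G : SimpleGraph V) {r : ℕ} (c : V → Fin r) : Prop :=
  ∀ i j : Fin r, i ≠ j → ∃ u v : V, c u = i ∧ c v = j ∧ G.Adj u v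

/-- The cycle on `n` vertices (for `n ≥ 3`). -/
def cycGraph (n : ℕ) : SimpleGraph (ZMod n) :=
  SimpleGraph.fromRel (fun i j => j = i + 1)

/-- `G` contains a subgraph isomorphic to `H`, i.e., there is an injective
graph homomorphism from `H` to `G`. -/
def ContainsCopy {α β : Type*} (H : SimpleGraph α) (G : SimpleGraph β) : Prop :=
  ∃ f : H →g G, Function.Injective f

/-- `f(r, {C₄, C₆})`: the least `k` such that some `{C₄, C₆}`-free graph admits a
complete partition into `r` parts each of size at most `k`. -/
noncomputable def fC4C6 (r : ℕ) : ℕ :=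
  sInf {k : ℕ | ∃ (n : ℕ) (G : SimpleGraph (Fin n)),
    ¬ ContainsCopy (cycGraph 4) G ∧ ¬ ContainsCopy (cycGraph 6) G ∧
    ∃ c : Fin n → Fin r, IsCompletePartition G c ∧
      ∀ i : Fin r, {v : Fin n | c v = i}.ncard ≤ k}

/-!
Lower bound. In a `{C₄, C₆}`-free graph, a path of three edges without the chord from its first to
its third vertex is determined by its ordered pair of ends. A dart `(x, y)` is the middle of at
least `(deg x - 2) (deg y - 1)` such paths, so these products sum to at most `n²`, and AM-GM turns
this into `2 e(G) ≤ n^(4/3) + 6 n`. A complete partition into `r` parts of size at most `k` has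
`n ≤ r k` and `2 e(G) ≥ r (r - 1)`, whence `√r ≤ k + 7`.

Upper bound. For `q = 2^(2e+1)` the generalized quadrangle `W(q)` has a polarity. Its polarity graph
is `{C₄, C₆}`-free because the incidence graph of a generalized quadrangle has girth eight. Off one
line of an absolute flag, its `q³ + q²` points fall into `q²` parts of size `q + 1` that form a
complete partition; hence `f(q²) ≤ q + 1`.
-/

open Finset

section Copies

variable {V W : Type*} {G : SimpleGraph V} {n : ℕ}

lemma ContainsCopy.trans_embedding {α : Type*} {H : SimpleGraph α} {G' : SimpleGraph W}
    (h : ContainsCopy H G) (φ : G ↪g G') : ContainsCopy H G' :=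
  let ⟨f, hf⟩ := h
  ⟨φ.toHom.comp f, φ.injective.comp hf⟩

lemma containsCopy_cycGraph_of_injective {f : ZMod n → V} (hf : Function.Injective f)
    (hadj : ∀ i, G.Adj (f i) (f (i + 1))) : ContainsCopy (cycGraph n) G := by
  refine ⟨⟨f, fun {i j} hij => ?_⟩, hf⟩
  obtain ⟨-, rfl | rfl⟩ := (SimpleGraph.fromRel_adj _ _ _).mp hij
  · exact hadj i
  · exact (hadj j).symm

lemma exists_injective_of_containsCopy_cycGraph (hn : n ≠ 1) (h : ContainsCopy (cycGraph n) G) :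
    ∃ f : ZMod n → V, Function.Injective f ∧ ∀ i, G.Adj (f i) (f (i + 1)) := by
  obtain ⟨f, hf⟩ := h
  have succ_ne (i : ZMod n) : i ≠ i + 1 := by
    simpa only [ne_eq, left_eq_add, ZMod.one_eq_zero_iff] using hn
  exact ⟨f, hf, fun i => f.map_adj ((SimpleGraph.fromRel_adj _ _ _).mpr ⟨succ_ne i, Or.inl rfl⟩)⟩

lemma not_containsCopy_cycGraph_of_subsingleton_neighborSet (hn : (2 : ZMod n) ≠ 0)
    (hG : ∀ v, (G.neighborSet v).Subsingleton) : ¬ ContainsCopy (cycGraph n) G := by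
  intro h
  have hn1 : n ≠ 1 := by
    rintro rfl
    exact hn (Subsingleton.elim _ _)
  obtain ⟨f, hf, hadj⟩ := exists_injective_of_containsCopy_cycGraph hn1 h
  have heq : (0 : ZMod n) = 0 + 1 + 1 := hf (hG _ (hadj 0).symm (hadj (0 + 1)))
  exact hn (by rw [heq]; norm_num)

lemma containsCopy_cycGraph_four {a b c d : V} (hab : G.Adj a b) (hbc : G.Adj b c)
    (hcd : G.Adj c d) (hda : G.Adj d a) (hac : a ≠ c) (hbd : b ≠ d) :
    ContainsCopy (cycGraph 4) G := by
  have hinj : Function.Injective ![a, b, c, d] := by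
    rw [← List.nodup_ofFn]
    simp [hab.ne, hac, hda.ne', hbc.ne, hbd, hcd.ne]
  refine containsCopy_cycGraph_of_injective hinj fun (i : Fin 4) => ?_
  fin_cases i
  exacts [hab, hbc, hcd, hda]

lemma containsCopy_cycGraph_six {a b c d e f : V} (hab : G.Adj a b) (hbc : G.Adj b c)
    (hcd : G.Adj c d) (hde : G.Adj d e) (hef : G.Adj e f) (hfa : G.Adj f a)
    (hnodup : [a, b, c, d, e, f].Nodup) : ContainsCopy (cycGraph 6) G := by
  have hinj : Function.Injective ![a, b, c, d, e, f] := by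
    rw [← List.nodup_ofFn]
    simpa using hnodup
  refine containsCopy_cycGraph_of_injective hinj fun (i : Fin 6) => ?_
  fin_cases i
  exacts [hab, hbc, hcd, hde, hef, hfa]

end Copies

section RealInequalities

lemma three_le_mul_add_inv_add_inv {u v : ℝ} (hu : 0 < u) (hv : 0 < v) :
    3 ≤ u * v + u⁻¹ + v⁻¹ := by
  have amgm := Real.geom_mean_le_arith_mean3_weighted (w₁ := 1 / 3) (w₂ := 1 / 3) (w₃ := 1 / 3)
    (by norm_num) (by norm_num) (by norm_num) (mul_pos hu hv).le (inv_pos.mpr hu).le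
    (inv_pos.mpr hv).le (by norm_num)
  rw [← Real.mul_rpow (by positivity) (by positivity),
    ← Real.mul_rpow (by positivity) (by positivity),
    show u * v * u⁻¹ * v⁻¹ = 1 by field_simp, Real.one_rpow] at amgm
  linarith

lemma sub_six_sq_mul_le {m : ℝ} (hm : 6 ≤ m) {p q : ℕ} (hp : 0 < p) (hq : 0 < q) :
    (m - 6) ^ 2 * (3 - m * (p : ℝ)⁻¹ - m * (q : ℝ)⁻¹) ≤ ((p - 2) * (q - 1) : ℕ) := by
  have hp0 : (0 : ℝ) < p := by exact_mod_cast hp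
  have hq0 : (0 : ℝ) < q := by exact_mod_cast hq
  have nonpos_of_small (h : 3 * (p : ℝ) < m ∨ 3 * (q : ℝ) < m) :
      3 - m * (p : ℝ)⁻¹ - m * (q : ℝ)⁻¹ ≤ 0 := by
    have hmp : 0 < m * (p : ℝ)⁻¹ := by positivity
    have hmq : 0 < m * (q : ℝ)⁻¹ := by positivity
    rcases h with h | h <;> rw [← lt_div_iff₀ ‹_›, div_eq_mul_inv] at h <;> linarith
  by_cases hsmall : 3 * (p : ℝ) < m ∨ 3 * (q : ℝ) < m
  · exact (mul_nonpos_of_nonneg_of_nonpos (sq_nonneg _) (nonpos_of_small hsmall)).trans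
      (Nat.cast_nonneg _)
  obtain ⟨hpm, hqm⟩ : m ≤ 3 * p ∧ m ≤ 3 * q := by simpa only [not_or, not_lt] using hsmall
  have shrink {t : ℝ} (ht : m ≤ 3 * t) : (m - 6) * (t / m) ≤ t - 2 := by
    rw [mul_div_assoc', div_le_iff₀ (by linarith)]
    linarith
  have cast_p : ((p - 2 : ℕ) : ℝ) = p - 2 := by
    push_cast [show 2 ≤ p by exact_mod_cast (by linarith : (2 : ℝ) ≤ p)]
    rfl
  have cast_q : ((q - 1 : ℕ) : ℝ) = q - 1 := by
    push_cast [show 1 ≤ q from hq]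
    rfl
  have amgm : 3 - m * (p : ℝ)⁻¹ - m * (q : ℝ)⁻¹ ≤ p / m * (q / m) := by
    have := three_le_mul_add_inv_add_inv (u := p / m) (v := q / m) (by positivity) (by positivity)
    rw [inv_div, inv_div, div_eq_mul_inv m, div_eq_mul_inv m] at this
    linarith
  calc (m - 6) ^ 2 * (3 - m * (p : ℝ)⁻¹ - m * (q : ℝ)⁻¹)
      ≤ (m - 6) ^ 2 * (p / m * (q / m)) := by gcongr
    _ = (m - 6) * (p / m) * ((m - 6) * (q / m)) := by ring
    _ ≤ (p - 2) * (q - 1) := by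
        have hq_nonneg : 0 ≤ (m - 6) * (q / m) := mul_nonneg (by linarith) (by positivity)
        exact mul_le_mul (shrink hpm) ((shrink hqm).trans (by linarith)) hq_nonneg (by linarith)
    _ = ((p - 2) * (q - 1) : ℕ) := by rw [Nat.cast_mul, cast_p, cast_q]

end RealInequalities

section EdgeBound

variable {V : Type*} {G : SimpleGraph V}

lemma eq_and_eq_of_paths_of_length_three (h4 : ¬ ContainsCopy (cycGraph 4) G)
    (h6 : ¬ ContainsCopy (cycGraph 6) G) {u v x y x' y' : V}
    (hux : G.Adj u x) (hxy : G.Adj x y) (hyv : G.Adj y v) (huy : ¬ G.Adj u y) (hne : u ≠ y)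
    (hxv : x ≠ v)
    (hux' : G.Adj u x') (hxy' : G.Adj x' y') (hyv' : G.Adj y' v) (huy' : ¬ G.Adj u y')
    (hne' : u ≠ y') (hxv' : x' ≠ v) :
    x = x' ∧ y = y' := by
  have huv : u ≠ v := fun h => huy (h ▸ hyv.symm)
  have hx_y' : x ≠ y' := fun h => huy' (h ▸ hux)
  have hx'_y : x' ≠ y := fun h => huy (h ▸ hux')
  by_cases hx : x = x'
  · subst hx
    refine ⟨rfl, by_contra fun hy => ?_⟩
    exact h4 (containsCopy_cycGraph_four hxy hyv hyv'.symm hxy'.symm hxv hy)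
  by_cases hy : y = y'
  · subst hy
    exact (h4 (containsCopy_cycGraph_four hux hxy hxy'.symm hux'.symm hne hx)).elim
  refine (h6 (containsCopy_cycGraph_six hux hxy hyv hyv'.symm hxy'.symm hux'.symm ?_)).elim
  simp [hux.ne, hne, huv, hne', hux'.ne, hxy.ne, hxv, hx_y', hx, hyv.ne, hy, hx'_y.symm,
    hyv'.ne', hxv'.symm, hxy'.ne']

variable [Fintype V] [DecidableRel G.Adj]

section

variable [DecidableEq V]

lemma card_inter_neighborFinset_le_one (h4 : ¬ ContainsCopy (cycGraph 4) G) {x y : V}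
    (hxy : x ≠ y) : #(G.neighborFinset x ∩ G.neighborFinset y) ≤ 1 := by
  refine card_le_one.mpr fun a ha b hb => by_contra fun hab => ?_
  simp only [mem_inter, SimpleGraph.mem_neighborFinset] at ha hb
  exact h4 (containsCopy_cycGraph_four ha.1 ha.2.symm hb.2 hb.1.symm hxy hab)

/-- The pairs `(u, v)` of endpoints of the walks `u, x, y, v` without repeated consecutive edges
whose middle step is the dart `d = (x, y)` and for which `u` and `y` are not adjacent. Excluding
the chord `uy` is what makes the middle dart of a `{C₄, C₆}`-free graph recoverable from `(u, v)`:
two triangles sharing a vertex would otherwise be a counterexample. -/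
def threePathEnds (d : G.Dart) : Finset (V × V) :=
  (G.neighborFinset d.fst \ G.neighborFinset d.snd).erase d.snd ×ˢ
    (G.neighborFinset d.snd).erase d.fst

lemma degree_sub_two_mul_degree_sub_one_le_card_threePathEnds
    (h4 : ¬ ContainsCopy (cycGraph 4) G) (d : G.Dart) :
    (G.degree d.fst - 2) * (G.degree d.snd - 1) ≤ #(threePathEnds d) := by
  rw [threePathEnds, card_product]
  refine Nat.mul_le_mul ?_ pred_card_le_card_erase
  have hcommon := card_inter_neighborFinset_le_one h4 d.fst_ne_snd
  have hsplit := card_sdiff_add_card_inter (G.neighborFinset d.fst) (G.neighborFinset d.snd)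
  have herase := pred_card_le_card_erase (a := d.snd)
    (s := G.neighborFinset d.fst \ G.neighborFinset d.snd)
  rw [G.card_neighborFinset_eq_degree] at hsplit
  lia

lemma pairwise_disjoint_threePathEnds (h4 : ¬ ContainsCopy (cycGraph 4) G)
    (h6 : ¬ ContainsCopy (cycGraph 6) G) :
    Pairwise (Function.onFun Disjoint (threePathEnds (G := G))) := by
  intro d d' hdd'
  refine disjoint_left.mpr fun ⟨u, v⟩ h h' => hdd' ?_
  simp only [threePathEnds, mem_product, mem_erase, mem_sdiff,
    SimpleGraph.mem_neighborFinset] at h h'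
  obtain ⟨⟨hne, hxu, hyu⟩, hvx, hyv⟩ := h
  obtain ⟨⟨hne', hxu', hyu'⟩, hvx', hyv'⟩ := h'
  have hmid := eq_and_eq_of_paths_of_length_three h4 h6
    hxu.symm d.adj hyv (fun h => hyu h.symm) hne hvx.symm
    hxu'.symm d'.adj hyv' (fun h => hyu' h.symm) hne' hvx'.symm
  exact SimpleGraph.Dart.ext _ _ (Prod.ext hmid.1 hmid.2)

end

lemma sum_degree_sub_two_mul_degree_sub_one_le (h4 : ¬ ContainsCopy (cycGraph 4) G)
    (h6 : ¬ ContainsCopy (cycGraph 6) G) :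
    ∑ d : G.Dart, (G.degree d.fst - 2) * (G.degree d.snd - 1) ≤ Fintype.card V ^ 2 := by
  classical
  calc ∑ d : G.Dart, (G.degree d.fst - 2) * (G.degree d.snd - 1)
      ≤ ∑ d : G.Dart, #(threePathEnds d) :=
        sum_le_sum fun d _ => degree_sub_two_mul_degree_sub_one_le_card_threePathEnds h4 d
    _ = #(univ.biUnion (threePathEnds (G := G))) :=
        (card_biUnion ((pairwise_disjoint_threePathEnds h4 h6).set_pairwise _)).symm
    _ ≤ Fintype.card (V × V) := card_le_univ _
    _ = Fintype.card V ^ 2 := by rw [Fintype.card_prod, sq]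

lemma sum_inv_degree_fst_le_card : ∑ d : G.Dart, (G.degree d.fst : ℝ)⁻¹ ≤ Fintype.card V := by
  classical
  calc ∑ d : G.Dart, (G.degree d.fst : ℝ)⁻¹
      = ∑ x : V, ∑ d : G.Dart with d.fst = x, (G.degree x : ℝ)⁻¹ :=
        (sum_fiberwise' univ (fun d : G.Dart => d.fst) fun x => (G.degree x : ℝ)⁻¹).symm
    _ = ∑ x : V, (G.degree x : ℝ) * (G.degree x : ℝ)⁻¹ := by
        simp only [sum_const, G.dart_fst_fiber_card_eq_degree, nsmul_eq_mul]
    _ ≤ ∑ _x : V, (1 : ℝ) := sum_le_sum fun x _ => mul_inv_le_one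
    _ = Fintype.card V := by simp

lemma sum_inv_degree_snd_le_card : ∑ d : G.Dart, (G.degree d.snd : ℝ)⁻¹ ≤ Fintype.card V := by
  rw [← SimpleGraph.Dart.symm_involutive.bijective.sum_comp]
  exact sum_inv_degree_fst_le_card

lemma sub_six_sq_mul_three_mul_card_dart_sub_le (h4 : ¬ ContainsCopy (cycGraph 4) G)
    (h6 : ¬ ContainsCopy (cycGraph 6) G) {m : ℝ} (hm : 6 ≤ m) :
    (m - 6) ^ 2 * (3 * Fintype.card G.Dart - 2 * m * Fintype.card V) ≤
      (Fintype.card V : ℝ) ^ 2 := by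
  have hfst := mul_le_mul_of_nonneg_left (sum_inv_degree_fst_le_card (G := G))
    (by linarith : 0 ≤ m)
  have hsnd := mul_le_mul_of_nonneg_left (sum_inv_degree_snd_le_card (G := G))
    (by linarith : 0 ≤ m)
  calc (m - 6) ^ 2 * (3 * Fintype.card G.Dart - 2 * m * Fintype.card V)
      ≤ (m - 6) ^ 2 * (3 * Fintype.card G.Dart - m * ∑ d : G.Dart, (G.degree d.fst : ℝ)⁻¹ -
          m * ∑ d : G.Dart, (G.degree d.snd : ℝ)⁻¹) := by
        refine mul_le_mul_of_nonneg_left ?_ (sq_nonneg _)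
        linarith
    _ = ∑ d : G.Dart,
          (m - 6) ^ 2 * (3 - m * (G.degree d.fst : ℝ)⁻¹ - m * (G.degree d.snd : ℝ)⁻¹) := by
        rw [← mul_sum, sum_sub_distrib, sum_sub_distrib, mul_sum, mul_sum, sum_const, card_univ,
          nsmul_eq_mul, mul_comm 3]
    _ ≤ ∑ d : G.Dart, (((G.degree d.fst - 2) * (G.degree d.snd - 1) : ℕ) : ℝ) :=
        sum_le_sum fun d _ => sub_six_sq_mul_le hm d.adj.degree_pos_left d.adj.degree_pos_right
    _ ≤ (Fintype.card V : ℝ) ^ 2 := by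
        exact_mod_cast sum_degree_sub_two_mul_degree_sub_one_le h4 h6

theorem card_dart_sub_six_mul_card_pow_three_le (h4 : ¬ ContainsCopy (cycGraph 4) G)
    (h6 : ¬ ContainsCopy (cycGraph 6) G) :
    ((Fintype.card G.Dart : ℝ) - 6 * Fintype.card V) ^ 3 ≤ (Fintype.card V : ℝ) ^ 4 := by
  set N : ℝ := (Fintype.card G.Dart : ℝ)
  set n : ℝ := (Fintype.card V : ℝ) with hn
  rcases le_or_gt (N - 6 * n) 0 with hneg | hpos
  · exact (Odd.pow_nonpos (by decide) hneg).trans (by positivity)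
  rcases isEmpty_or_nonempty V with hV | hV
  · have : IsEmpty G.Dart := ⟨fun d => hV.elim d.fst⟩
    simp [N, n]
  have hn0 : 0 < n := by simpa only [hn, Nat.cast_pos] using Fintype.card_pos
  -- The average degree is the point at which the tangent-line form of AM-GM loses nothing.
  have hm : 6 ≤ N / n := by
    rw [le_div_iff₀ hn0]
    linarith
  have key : (N / n - 6) ^ 2 * N ≤ n ^ 2 := by
    have := sub_six_sq_mul_three_mul_card_dart_sub_le h4 h6 hm
    rwa [show 3 * N - 2 * (N / n) * n = N by field_simp; ring] at this
  calc (N - 6 * n) ^ 3 ≤ (N - 6 * n) ^ 2 * N := by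
        rw [pow_succ]
        gcongr
        linarith
    _ = n ^ 2 * ((N / n - 6) ^ 2 * N) := by field_simp
    _ ≤ n ^ 2 * n ^ 2 := by gcongr
    _ = n ^ 4 := by ring

end EdgeBound

section CompletePartition

variable {V : Type*} {r k : ℕ} {c : V → Fin r}

lemma card_le_mul_of_ncard_fiber_le [Fintype V] (hk : ∀ i, {v | c v = i}.ncard ≤ k) :
    Fintype.card V ≤ r * k := by
  have hfiber (i : Fin r) : #{v | c v = i} ≤ k := by
    simpa only [← Set.ncard_coe_finset, coe_filter, mem_univ, true_and] using hk i
  simpa [mul_comm] using card_le_mul_card_image_of_maps_to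
    (fun v _ => mem_univ (c v)) k fun i _ => hfiber i

variable {G : SimpleGraph V}

lemma IsCompletePartition.mul_self_sub_le_card_dart [Fintype V] [DecidableRel G.Adj]
    (hc : IsCompletePartition G c) :
    r * r - r ≤ Fintype.card G.Dart := by
  have hsurj : Set.SurjOn (fun d : G.Dart => (c d.fst, c d.snd))
      (univ : Finset G.Dart) (univ : Finset (Fin r)).offDiag := by
    rintro ⟨i, j⟩ hij
    obtain ⟨u, v, rfl, rfl, huv⟩ := hc i j (mem_offDiag.mp hij).2.2
    exact ⟨⟨(u, v), huv⟩, mem_coe.mpr (mem_univ _), rfl⟩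
  simpa [offDiag_card] using card_le_card_of_surjOn _ hsurj

theorem IsCompletePartition.sqrt_le_add_seven [Finite V] (hc : IsCompletePartition G c)
    (h4 : ¬ ContainsCopy (cycGraph 4) G) (h6 : ¬ ContainsCopy (cycGraph 6) G)
    (hk : ∀ i, {v | c v = i}.ncard ≤ k) : √(r : ℝ) ≤ k + 7 := by
  classical
  have := Fintype.ofFinite V
  obtain ⟨s, hs⟩ : ∃ s, s = √(r : ℝ) := ⟨_, rfl⟩
  rw [← hs]
  have hr : (r : ℝ) = s ^ 2 := by rw [hs, Real.sq_sqrt (Nat.cast_nonneg r)]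
  by_contra! hlt
  have hs7 : 7 < s := lt_of_le_of_lt (le_add_of_nonneg_left (Nat.cast_nonneg k)) hlt
  have hV : (Fintype.card V : ℝ) ≤ s ^ 2 * k := by
    rw [← hr]
    exact_mod_cast card_le_mul_of_ncard_fiber_le hk
  have hDart : s ^ 4 - s ^ 2 ≤ Fintype.card G.Dart := by
    have : (r * r : ℝ) ≤ Fintype.card G.Dart + r := by
      exact_mod_cast Nat.sub_le_iff_le_add.mp hc.mul_self_sub_le_card_dart
    rw [hr] at this
    linarith
  have hcube : (s ^ 4 - s ^ 2 - 6 * (s ^ 2 * k)) ^ 3 ≤ (s ^ 3 * k) ^ 3 :=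
    calc (s ^ 4 - s ^ 2 - 6 * (s ^ 2 * k)) ^ 3
        ≤ ((Fintype.card G.Dart : ℝ) - 6 * Fintype.card V) ^ 3 :=
          (Odd.strictMono_pow (by decide)).monotone (by linarith)
      _ ≤ (Fintype.card V : ℝ) ^ 4 := card_dart_sub_six_mul_card_pow_three_le h4 h6
      _ ≤ (s ^ 2 * k) ^ 4 := by gcongr
      _ = s ^ 8 * k ^ 3 * k := by ring
      _ ≤ s ^ 8 * k ^ 3 * s := by gcongr; linarith
      _ = (s ^ 3 * k) ^ 3 := by ring
  have hlin : s ^ 4 - s ^ 2 - 6 * (s ^ 2 * k) ≤ s ^ 3 * k :=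
    (Odd.strictMono_pow (by decide)).le_iff_le.mp hcube
  have hgap : s ^ 3 * (k + 7) < s ^ 3 * s := by gcongr
  have hsk : s ^ 2 * k ≤ s ^ 2 * s := by gcongr; linarith
  have hs2 : s ^ 2 * 1 ≤ s ^ 2 * s := by gcongr; linarith
  linarith

end CompletePartition

section Extremal

/-- `k` belongs to the set whose infimum is `fC4C6 r`: some finite `{C₄, C₆}`-free graph has a
complete partition into `r` parts of size at most `k`. -/
def HasC4C6FreePartition (r k : ℕ) : Prop :=
  ∃ (n : ℕ) (G : SimpleGraph (Fin n)),
    ¬ ContainsCopy (cycGraph 4) G ∧ ¬ ContainsCopy (cycGraph 6) G ∧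
    ∃ c : Fin n → Fin r, IsCompletePartition G c ∧ ∀ i : Fin r, {v | c v = i}.ncard ≤ k

lemma hasC4C6FreePartition_of_finite {V P : Type*} [Finite V] [Finite P] {k : ℕ}
    (G : SimpleGraph V) (h4 : ¬ ContainsCopy (cycGraph 4) G)
    (h6 : ¬ ContainsCopy (cycGraph 6) G) (c : V → P)
    (hc : ∀ i j, i ≠ j → ∃ u v, c u = i ∧ c v = j ∧ G.Adj u v)
    (hk : ∀ i, {v | c v = i}.ncard ≤ k) : HasC4C6FreePartition (Nat.card P) k := by
  let eV := Finite.equivFin V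
  let eP := Finite.equivFin P
  let φ := SimpleGraph.Embedding.comap eV.symm.toEmbedding G
  refine ⟨Nat.card V, G.comap eV.symm, fun h => h4 (h.trans_embedding φ),
    fun h => h6 (h.trans_embedding φ), fun v => eP (c (eV.symm v)), fun i j hij => ?_, fun i => ?_⟩
  · obtain ⟨u, v, hu, hv, huv⟩ := hc (eP.symm i) (eP.symm j) (eP.symm.injective.ne hij)
    exact ⟨eV u, eV v, by simp [hu], by simp [hv], by simpa using huv⟩
  · have hpre : {v | eP (c (eV.symm v)) = i} = eV.symm ⁻¹' {v | c v = eP.symm i} := by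
      ext v
      exact (eP.eq_symm_apply).symm
    rw [hpre, Set.ncard_preimage_of_injective_subset_range eV.symm.injective
      (by simp [eV.symm.surjective.range_eq])]
    exact hk _

/-- The perfect matching `(i, j) — (j, i)` on the off-diagonal pairs of `P`; its partition by first
coordinates is complete. -/
def swapGraph (P : Type*) : SimpleGraph (P × P) :=
  SimpleGraph.fromRel fun p q => q = p.swap

lemma swapGraph_adj {P : Type*} {p q : P × P} : (swapGraph P).Adj p q ↔ p ≠ q ∧ q = p.swap := by
  rw [swapGraph, SimpleGraph.fromRel_adj]
  refine and_congr_right fun _ => or_iff_left_of_imp ?_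
  rintro rfl
  exact q.swap_swap.symm

lemma hasC4C6FreePartition_self (r : ℕ) : HasC4C6FreePartition r r := by
  have hsub (p : Fin r × Fin r) : ((swapGraph (Fin r)).neighborSet p).Subsingleton :=
    fun q hq q' hq' => (swapGraph_adj.mp hq).2.trans (swapGraph_adj.mp hq').2.symm
  have hfiber (i : Fin r) : {p : Fin r × Fin r | p.1 = i}.ncard ≤ r := by
    have : {p : Fin r × Fin r | p.1 = i} = Set.range (Prod.mk i) := by
      ext ⟨a, b⟩
      simp [eq_comm]
    rw [this, Set.ncard_range_of_injective (Prod.mk_right_injective i), Nat.card_fin]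
  simpa using hasC4C6FreePartition_of_finite (swapGraph (Fin r))
    (not_containsCopy_cycGraph_of_subsingleton_neighborSet (by decide) hsub)
    (not_containsCopy_cycGraph_of_subsingleton_neighborSet (by decide) hsub) Prod.fst
    (fun i j hij => ⟨(i, j), (j, i), rfl, rfl, swapGraph_adj.mpr ⟨by simp [hij], rfl⟩⟩) hfiber

lemma HasC4C6FreePartition.fC4C6_le {r k : ℕ} (h : HasC4C6FreePartition r k) : fC4C6 r ≤ k :=
  Nat.sInf_le h

lemma hasC4C6FreePartition_fC4C6 (r : ℕ) : HasC4C6FreePartition r (fC4C6 r) :=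
  Nat.sInf_mem (s := {k | HasC4C6FreePartition r k}) ⟨r, hasC4C6FreePartition_self r⟩

theorem sqrt_le_fC4C6_add_seven (r : ℕ) : √(r : ℝ) ≤ fC4C6 r + 7 := by
  obtain ⟨n, G, h4, h6, c, hc, hk⟩ := hasC4C6FreePartition_fC4C6 r
  exact hc.sqrt_le_add_seven h4 h6 hk

end Extremal

section QuadranglePoints

/-- The points of the symplectic generalized quadrangle `W(q)` off a line `ℓ` of an absolute flag
`(P, ℓ)`: the `q³` points `affine a b c` not collinear with `P`, and the `q²` points `ideal a c`
collinear with `P`. -/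
inductive QuadranglePoint (F : Type*)
  | affine (a b c : F)
  | ideal (a c : F)

namespace QuadranglePoint

variable {F : Type*}

instance [Finite F] : Finite (QuadranglePoint F) := by
  let f : (F × F × F) ⊕ (F × F) → QuadranglePoint F :=
    Sum.elim (fun p => affine p.1 p.2.1 p.2.2) fun p => ideal p.1 p.2
  refine Finite.of_surjective f ?_
  rintro (⟨a, b, c⟩ | ⟨a, c⟩)
  exacts [⟨.inl (a, b, c), rfl⟩, ⟨.inr (a, c), rfl⟩]

lemma exists_affine_coords {ι : Type*} {f : ι → QuadranglePoint F}
    (hf : ∀ i a c, f i ≠ ideal a c) :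
    ∃ a b c : ι → F, f = fun i => affine (a i) (b i) (c i) := by
  have hcoords (i : ι) : ∃ a b c, f i = affine a b c := by
    rcases hfi : f i with ⟨a, b, c⟩ | ⟨a, c⟩
    · exact ⟨a, b, c, rfl⟩
    · exact absurd hfi (hf i a c)
  choose a b c h using hcoords
  exact ⟨a, b, c, funext h⟩

/-- The part of a point in the partition of `QuadranglePoint F` into `q²` parts of size `q + 1`. -/
def part : QuadranglePoint F → F × F
  | affine _ b c => (b, c)
  | ideal a c => (c, a)

lemma ncard_part_fiber_le [Finite F] (i : F × F) :
    {v : QuadranglePoint F | part v = i}.ncard ≤ Nat.card F + 1 := by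
  have hfiber : {v | part v = i} ⊆
      insert (ideal i.2 i.1) (Set.range fun a => affine a i.1 i.2) := by
    rintro (⟨a, b, c⟩ | ⟨a, c⟩) rfl
    · exact Or.inr ⟨a, rfl⟩
    · exact Or.inl rfl
  calc {v : QuadranglePoint F | part v = i}.ncard
      ≤ (insert (ideal i.2 i.1) (Set.range fun a => affine a i.1 i.2)).ncard :=
        Set.ncard_le_ncard hfiber
    _ ≤ (Set.range fun a => affine a i.1 i.2).ncard + 1 := Set.ncard_insert_le _ _
    _ = Nat.card F + 1 := by
        rw [Set.ncard_range_of_injective fun a a' h => (affine.inj h).1]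

end QuadranglePoint

end QuadranglePoints

section TitsPolarity

variable {F : Type*} [Field F]

/-- A Tits endomorphism of a field: a square root of the squaring map. Its existence forces
characteristic two. -/
def IsTitsEndomorphism (σ : F →+* F) : Prop :=
  ∀ x, σ (σ x) = x ^ 2

lemma IsTitsEndomorphism.charTwo {σ : F →+* F} (hσ : IsTitsEndomorphism σ) : CharP F 2 := by
  have h : (2 : F) = 2 ^ 2 := by simpa only [map_ofNat] using hσ 2
  exact CharTwo.of_one_ne_zero_of_two_eq_zero one_ne_zero (by linear_combination -h)

lemma isTitsEndomorphism_iterateFrobenius [Fintype F] [CharP F 2] {e : ℕ}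
    (hF : Fintype.card F = 2 ^ (2 * e + 1)) :
    IsTitsEndomorphism (iterateFrobenius F 2 (e + 1)) := by
  intro x
  calc (x ^ 2 ^ (e + 1)) ^ 2 ^ (e + 1) = (x ^ Fintype.card F) ^ 2 := by
        rw [hF, ← pow_mul, ← pow_mul]
        ring_nf
    _ = x ^ 2 := by rw [FiniteField.pow_card]

namespace QuadranglePoint

/-- `u` lies on the line that the Tits polarity assigns to `v`. -/
def Conj (σ : F →+* F) : QuadranglePoint F → QuadranglePoint F → Prop
  | affine a b c, affine a' b' c' => b + c' = a * σ a' ∧ b' + c = a' * σ a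
  | affine a _ c, ideal a' c' => a = a' ∧ c = c'
  | ideal a' c', affine a _ c => a = a' ∧ c = c'
  | ideal _ _, ideal _ _ => False

variable {σ : F →+* F} {a a' b b' c c' : F} {u v : QuadranglePoint F}

lemma conj_affine_affine :
    Conj σ (affine a b c) (affine a' b' c') ↔ b + c' = a * σ a' ∧ b' + c = a' * σ a :=
  Iff.rfl

lemma conj_ideal_left : Conj σ (ideal a c) v ↔ ∃ b, v = affine a b c := by
  cases v <;> simp [Conj]

lemma Conj.symm : Conj σ u v → Conj σ v u := by
  cases u <;> cases v
  exacts [And.symm, id, id, id]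

lemma conj_ideal_right : Conj σ v (ideal a c) ↔ ∃ b, v = affine a b c :=
  ⟨fun h => conj_ideal_left.mp h.symm, fun h => (conj_ideal_left.mpr h).symm⟩

lemma eq_of_conj_affine {a₁ a₂ b₁ b₂ c₁ c₂ : F} (ha : a₁ = a₂)
    (h₁ : Conj σ (affine a₁ b₁ c₁) (affine a b c)) (h₂ : Conj σ (affine a₂ b₂ c₂) (affine a b c)) :
    affine a₁ b₁ c₁ = affine a₂ b₂ c₂ := by
  subst ha
  rw [conj_affine_affine] at h₁ h₂
  obtain rfl : b₁ = b₂ := by linear_combination h₁.1 - h₂.1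
  obtain rfl : c₁ = c₂ := by linear_combination h₁.2 - h₂.2
  rfl

lemma eq_ideal_of_closed_four {v₁ v₂ v₃ : QuadranglePoint F} (h₁ : Conj σ (ideal a c) v₁)
    (h₂ : Conj σ v₁ v₂) (h₃ : Conj σ v₂ v₃) (h₄ : Conj σ v₃ (ideal a c)) (h13 : v₁ ≠ v₃) :
    v₂ = ideal a c := by
  obtain ⟨b₁, rfl⟩ := conj_ideal_left.mp h₁
  obtain ⟨b₃, rfl⟩ := conj_ideal_right.mp h₄
  rcases v₂ with ⟨a₂, b₂, c₂⟩ | ⟨a₂, c₂⟩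
  · exact absurd (eq_of_conj_affine rfl h₂ h₃.symm) h13
  · obtain ⟨rfl, rfl⟩ := h₂
    rfl

lemma eq_of_closed_six_through_ideal {v₁ v₂ v₃ v₄ v₅ : QuadranglePoint F}
    (h₁ : Conj σ (ideal a c) v₁) (h₂ : Conj σ v₁ v₂) (h₃ : Conj σ v₂ v₃) (h₄ : Conj σ v₃ v₄)
    (h₅ : Conj σ v₄ v₅) (h₆ : Conj σ v₅ (ideal a c)) (h02 : v₂ ≠ ideal a c)
    (h04 : v₄ ≠ ideal a c) (h13 : v₁ ≠ v₃) : v₂ = v₄ := by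
  obtain ⟨b₁, rfl⟩ := conj_ideal_left.mp h₁
  obtain ⟨b₅, rfl⟩ := conj_ideal_right.mp h₆
  rcases v₂ with ⟨a₂, b₂, c₂⟩ | ⟨a₂, c₂⟩
  swap
  · obtain ⟨rfl, rfl⟩ := h₂
    exact absurd rfl h02
  rcases v₄ with ⟨a₄, b₄, c₄⟩ | ⟨a₄, c₄⟩
  swap
  · obtain ⟨rfl, rfl⟩ := h₅
    exact absurd rfl h04
  rw [conj_affine_affine] at h₂ h₅
  rcases v₃ with ⟨a₃, b₃, c₃⟩ | ⟨a₃, c₃⟩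
  · have hprod : (a₂ - a₄) * (σ a - σ a₃) = 0 := by
      rw [conj_affine_affine] at h₃ h₄
      linear_combination h₅.1 - h₂.2 + h₃.1 - h₄.2
    rcases mul_eq_zero.mp hprod with h | h
    · obtain rfl := sub_eq_zero.mp h
      exact eq_of_conj_affine rfl h₃ h₄.symm
    · obtain rfl := σ.injective (sub_eq_zero.mp h)
      exact absurd (eq_of_conj_affine rfl h₂ h₃.symm) h13
  · obtain ⟨rfl, rfl⟩ := h₃
    obtain ⟨rfl, rfl⟩ := h₄
    obtain rfl : b₂ = b₄ := by linear_combination h₂.2 - h₅.1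
    rfl

lemma sub_eq_of_conj {a₁ a₂ b₁ b₂ c₁ c₂ : F} (h₁ : Conj σ (affine a₁ b₁ c₁) (affine a b c))
    (h₂ : Conj σ (affine a b c) (affine a₂ b₂ c₂)) : b₁ - b₂ = (a₁ - a₂) * σ a := by
  rw [conj_affine_affine] at h₁ h₂
  linear_combination h₁.1 - h₂.2

lemma map_sub_map_eq_of_conj (hσ : IsTitsEndomorphism σ) {a₁ a₂ b₁ b₂ c₁ c₂ : F}
    (h₁ : Conj σ (affine a₁ b₁ c₁) (affine a b c))
    (h₂ : Conj σ (affine a b c) (affine a₂ b₂ c₂)) :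
    σ c₁ - σ c₂ = (a₁ ^ 2 - a₂ ^ 2) * σ a := by
  rw [conj_affine_affine] at h₁ h₂
  have hsub : c₁ - c₂ = a * (σ a₁ - σ a₂) := by linear_combination h₁.2 - h₂.1
  rw [← map_sub, hsub, map_mul, map_sub, hσ, hσ, mul_comm]

lemma eq_or_eq_of_closed_four_affine {a b c : ZMod 4 → F}
    (h : ∀ i, Conj σ (affine (a i) (b i) (c i)) (affine (a (i + 1)) (b (i + 1)) (c (i + 1)))) :
    a 0 = a 2 ∨ a 1 = a 3 := by
  have h02 : b 0 - b 2 = (a 0 - a 2) * σ (a 1) := sub_eq_of_conj (h 0) (h 1)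
  have h20 : b 2 - b 0 = (a 2 - a 0) * σ (a 3) := sub_eq_of_conj (h 2) (h 3)
  have hprod : (a 0 - a 2) * (σ (a 1) - σ (a 3)) = 0 := by linear_combination -h02 - h20
  refine (mul_eq_zero.mp hprod).imp sub_eq_zero.mp fun h13 => ?_
  exact σ.injective (sub_eq_zero.mp h13)

lemma eq_or_eq_or_eq_of_closed_six_affine (hσ : IsTitsEndomorphism σ) {a b c : ZMod 6 → F}
    (h : ∀ i, Conj σ (affine (a i) (b i) (c i)) (affine (a (i + 1)) (b (i + 1)) (c (i + 1)))) :
    a 2 = a 4 ∨ a 4 = a 0 ∨ a 3 = a 5 := by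
  have h02 : b 0 - b 2 = (a 0 - a 2) * σ (a 1) := sub_eq_of_conj (h 0) (h 1)
  have h24 : b 2 - b 4 = (a 2 - a 4) * σ (a 3) := sub_eq_of_conj (h 2) (h 3)
  have h40 : b 4 - b 0 = (a 4 - a 0) * σ (a 5) := sub_eq_of_conj (h 4) (h 5)
  have k02 : σ (c 0) - σ (c 2) = (a 0 ^ 2 - a 2 ^ 2) * σ (a 1) :=
    map_sub_map_eq_of_conj hσ (h 0) (h 1)
  have k24 : σ (c 2) - σ (c 4) = (a 2 ^ 2 - a 4 ^ 2) * σ (a 3) :=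
    map_sub_map_eq_of_conj hσ (h 2) (h 3)
  have k40 : σ (c 4) - σ (c 0) = (a 4 ^ 2 - a 0 ^ 2) * σ (a 5) :=
    map_sub_map_eq_of_conj hσ (h 4) (h 5)
  -- Summing around the triangle gives two linear relations among the `σ (a (2 * j + 1))`, whose
  -- elimination leaves a Vandermonde product.
  have hprod : (a 2 - a 4) * ((a 4 - a 0) * (σ (a 3) - σ (a 5))) = 0 := by
    linear_combination (a 0 + a 2) * (h02 + h24 + h40) - (k02 + k24 + k40)
  refine (mul_eq_zero.mp hprod).imp sub_eq_zero.mp fun h => ?_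
  refine (mul_eq_zero.mp h).imp sub_eq_zero.mp fun h35 => ?_
  exact σ.injective (sub_eq_zero.mp h35)

/-- The polarity graph of the Tits polarity attached to `σ`, restricted to `QuadranglePoint F`. -/
def titsPolarityGraph (σ : F →+* F) : SimpleGraph (QuadranglePoint F) where
  Adj u v := u ≠ v ∧ Conj σ u v
  symm := ⟨fun _ _ h => ⟨h.1.symm, h.2.symm⟩⟩
  loopless := ⟨fun _ h => h.1 rfl⟩

lemma not_containsCopy_cycGraph_four : ¬ ContainsCopy (cycGraph 4) (titsPolarityGraph σ) := by
  intro hcopy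
  obtain ⟨f, hf, hadj⟩ := exists_injective_of_containsCopy_cycGraph (by decide) hcopy
  have hne (k : ZMod 4) {i j : ZMod 4} (hij : i ≠ j) : f (k + i) ≠ f (k + j) :=
    hf.ne ((add_right_injective k).ne hij)
  have hconj (k i : ZMod 4) : Conj σ (f (k + i)) (f (k + (i + 1))) := by
    simpa only [add_assoc] using (hadj (k + i)).2
  have hideal (k : ZMod 4) (a c : F) : f k ≠ ideal a c := by
    intro hk
    rw [← add_zero k] at hk
    refine hne k (by decide : (2 : ZMod 4) ≠ 0) (hk ▸ ?_)
    exact eq_ideal_of_closed_four (hk ▸ hconj k 0) (hconj k 1) (hconj k 2) (hk ▸ hconj k 3)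
      (hne k (by decide))
  obtain ⟨a, b, c, rfl⟩ := exists_affine_coords hideal
  rcases eq_or_eq_of_closed_four_affine fun i => (hadj i).2 with h02 | h13
  · exact hf.ne (by decide : (0 : ZMod 4) ≠ 2)
      (eq_of_conj_affine h02 (hadj 0).2 (hadj 1).2.symm)
  · exact hf.ne (by decide : (1 : ZMod 4) ≠ 3)
      (eq_of_conj_affine h13 (hadj 1).2 (hadj 2).2.symm)

lemma not_containsCopy_cycGraph_six (hσ : IsTitsEndomorphism σ) :
    ¬ ContainsCopy (cycGraph 6) (titsPolarityGraph σ) := by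
  intro hcopy
  obtain ⟨f, hf, hadj⟩ := exists_injective_of_containsCopy_cycGraph (by decide) hcopy
  have hne (k : ZMod 6) {i j : ZMod 6} (hij : i ≠ j) : f (k + i) ≠ f (k + j) :=
    hf.ne ((add_right_injective k).ne hij)
  have hconj (k i : ZMod 6) : Conj σ (f (k + i)) (f (k + (i + 1))) := by
    simpa only [add_assoc] using (hadj (k + i)).2
  have hideal (k : ZMod 6) (a c : F) : f k ≠ ideal a c := by
    intro hk
    rw [← add_zero k] at hk
    refine hne k (by decide : (2 : ZMod 6) ≠ 4) ?_
    exact eq_of_closed_six_through_ideal (hk ▸ hconj k 0) (hconj k 1) (hconj k 2) (hconj k 3)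
      (hconj k 4) (hk ▸ hconj k 5) (hk ▸ hne k (by decide)) (hk ▸ hne k (by decide))
      (hne k (by decide))
  obtain ⟨a, b, c, rfl⟩ := exists_affine_coords hideal
  rcases eq_or_eq_or_eq_of_closed_six_affine hσ fun i => (hadj i).2 with h24 | h40 | h35
  · exact hf.ne (by decide : (2 : ZMod 6) ≠ 4)
      (eq_of_conj_affine h24 (hadj 2).2 (hadj 3).2.symm)
  · exact hf.ne (by decide : (4 : ZMod 6) ≠ 0)
      (eq_of_conj_affine h40 (hadj 4).2 (hadj 5).2.symm)
  · exact hf.ne (by decide : (3 : ZMod 6) ≠ 5)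
      (eq_of_conj_affine h35 (hadj 3).2 (hadj 4).2.symm)

lemma exists_titsPolarityGraph_adj (hσ : IsTitsEndomorphism σ) {i j : F × F} (hij : i ≠ j) :
    ∃ u v, part u = i ∧ part v = j ∧ (titsPolarityGraph σ).Adj u v := by
  suffices ∃ u v, part u = i ∧ part v = j ∧ Conj σ u v by
    obtain ⟨u, v, rfl, rfl, huv⟩ := this
    exact ⟨u, v, rfl, rfl, ne_of_apply_ne part hij, huv⟩
  have := hσ.charTwo
  obtain ⟨b, c⟩ := i
  obtain ⟨b', c'⟩ := j
  by_cases hbc' : b + c' = 0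
  · obtain rfl := CharTwo.add_eq_zero.mp hbc'
    exact ⟨ideal c b, affine c b' b, rfl, rfl, rfl, rfl⟩
  by_cases hb'c : b' + c = 0
  · obtain rfl := CharTwo.add_eq_zero.mp hb'c
    exact ⟨affine c' b b', ideal c' b', rfl, rfl, rfl, rfl⟩
  -- The first coordinates below solve `x * σ y = b + c'` and `y * σ x = b' + c`.
  have hσbc' : σ (b + c') ≠ 0 := (map_ne_zero σ).mpr hbc'
  have hσb'c : σ (b' + c) ≠ 0 := (map_ne_zero σ).mpr hb'c
  refine ⟨affine (σ (b' + c) / (b + c')) b c, affine (σ (b + c') / (b' + c)) b' c', rfl, rfl,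
    conj_affine_affine.mpr ⟨?_, ?_⟩⟩
  all_goals
    rw [map_div₀, hσ]
    field_simp

end QuadranglePoint

theorem fC4C6_card_sq_le [Finite F] {σ : F →+* F} (hσ : IsTitsEndomorphism σ) :
    fC4C6 (Nat.card F ^ 2) ≤ Nat.card F + 1 := by
  rw [sq, ← Nat.card_prod]
  exact (hasC4C6FreePartition_of_finite (QuadranglePoint.titsPolarityGraph σ)
    QuadranglePoint.not_containsCopy_cycGraph_four
    (QuadranglePoint.not_containsCopy_cycGraph_six hσ) QuadranglePoint.part
    (fun _ _ => QuadranglePoint.exists_titsPolarityGraph_adj hσ)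
    QuadranglePoint.ncard_part_fiber_le).fC4C6_le

lemma fC4C6_two_pow_le (e : ℕ) : fC4C6 (2 ^ (2 * (2 * e + 1))) ≤ 2 ^ (2 * e + 1) + 1 := by
  let F := GaloisField 2 (2 * e + 1)
  have := Fintype.ofFinite F
  have hcard : Nat.card F = 2 ^ (2 * e + 1) := GaloisField.card 2 _ (by lia)
  have hσ : IsTitsEndomorphism (iterateFrobenius F 2 (e + 1)) :=
    isTitsEndomorphism_iterateFrobenius (by rw [← Nat.card_eq_fintype_card, hcard])
  have hle := fC4C6_card_sq_le hσ
  rwa [hcard, ← pow_mul, mul_comm _ 2] at hle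

end TitsPolarity

section Asymptotics

open Asymptotics Filter

lemma two_pow_le_fC4C6_add_seven (e : ℕ) :
    (2 : ℝ) ^ (2 * e + 1) ≤ fC4C6 (2 ^ (2 * (2 * e + 1))) + 7 :=
  calc (2 : ℝ) ^ (2 * e + 1) = √((2 ^ (2 * (2 * e + 1)) : ℕ) : ℝ) := by
        rw [Nat.cast_pow, Nat.cast_ofNat, mul_comm 2 (2 * e + 1), pow_mul,
          Real.sqrt_sq (by positivity)]
    _ ≤ fC4C6 (2 ^ (2 * (2 * e + 1))) + 7 := sqrt_le_fC4C6_add_seven _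

lemma tendsto_div_nhds_one_of_abs_sub_le {ι : Type*} {l : Filter ι} {f g : ι → ℝ} {C : ℝ}
    (hg : Tendsto g l atTop) (hfg : ∀ i, |f i - g i| ≤ C) :
    Tendsto (fun i => f i / g i) l (nhds 1) := by
  have hbounded : (f - g) =O[l] fun _ => (1 : ℝ) :=
    IsBigO.of_bound C (Eventually.of_forall fun i => by simpa using hfg i)
  have hone : (fun _ => (1 : ℝ)) =o[l] g :=
    isLittleO_const_left.mpr (Or.inr (tendsto_abs_atTop_atTop.comp hg))
  have hequiv : IsEquivalent l f g := hbounded.trans_isLittleO hone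
  exact (isEquivalent_iff_tendsto_one (hg.eventually_ne_atTop 0)).mp hequiv

end Asymptotics

theorem fC4C6_asymptotics :
    Filter.Tendsto
      (fun e : ℕ => (fC4C6 (2 ^ (2 * (2 * e + 1))) : ℝ) / (2 ^ (2 * e + 1) : ℝ))
      Filter.atTop (nhds 1) := by
  have hq : Filter.Tendsto (fun e : ℕ => (2 : ℝ) ^ (2 * e + 1)) Filter.atTop Filter.atTop :=
    (tendsto_pow_atTop_atTop_of_one_lt one_lt_two).comp
      (Filter.tendsto_atTop_mono (fun e => show e ≤ 2 * e + 1 by lia) Filter.tendsto_id)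
  refine tendsto_div_nhds_one_of_abs_sub_le (C := 7) hq fun e => abs_sub_le_iff.mpr ⟨?_, ?_⟩
  · have hupper : (fC4C6 (2 ^ (2 * (2 * e + 1))) : ℝ) ≤ 2 ^ (2 * e + 1) + 1 := by
      exact_mod_cast fC4C6_two_pow_le e
    linarith
  · linarith [two_pow_le_fC4C6_add_seven e]
end

section
/- For the sequence ρ_e = 3^{3(2e+1)} (e = 1, 2, 3, ...), one has f(ρ_e, {C₄, C₆, C₈, C₁₀}) = (1 + o(1))·ρ_e^{2/3}; that is, f(ρ_e, {C₄, C₆, C₈, C₁₀}) / 3^{2(2e+1)} tends to 1 as e tends to infinity. -/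
/-- `f(r, {C₄, C₆, C₈, C₁₀})`: the least `k` such that some
`{C₄, C₆, C₈, C₁₀}`-free graph admits a complete partition into `r` parts
each of size at most `k`. -/
noncomputable def fC4C6C8C10 (r : ℕ) : ℕ :=
  sInf {k : ℕ | ∃ (n : ℕ) (G : SimpleGraph (Fin n)),
    ¬ ContainsCopy (cycGraph 4) G ∧ ¬ ContainsCopy (cycGraph 6) G ∧
    ¬ ContainsCopy (cycGraph 8) G ∧ ¬ ContainsCopy (cycGraph 10) G ∧
    ∃ c : Fin n → Fin r, IsCompletePartition G c ∧
      ∀ i : Fin r, {v : Fin n | c v = i}.ncard ≤ k}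

/-!
*Lower bound.* In a graph without `C₄, …, C₂ₖ₊₂` geodesics of length at most `k + 1` are determined
by their ends. Weight each pair of vertices at distance `k + 1` with the product of the inverse
degrees of the `k` inner vertices of its geodesic. At an inner vertex all but two of the neighbours
prolong the geodesic, so the weights add up to almost the sum of the degrees, while comparing each
weight with `d⁻ᵏ` by means of `1 + t ≤ exp t` bounds them from above. Hence a graph with `n`
vertices and average degree at least `d` has `d ^ k * (d - 2 * k * (k + 1)) ≤ n`. A complete
partition into `q³` parts of size at most `q²` forces `d ≥ q - 1`, so for `k = 4` there are at least
about `q⁵` vertices, hence some part has at least about `q²` of them.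

*Upper bound.* Over a field with `q = 3 ^ (2 * e + 1)` elements the Frobenius endomorphism has a
square root `θ`, which gives a polarity of the Ree–Tits hexagon. Colour the affine part of its
polarity graph by the first three of five coordinates. Two points of different colours are adjacent
for exactly one choice of their last two coordinates, so the `q³` classes of size `q²` form a
complete partition. Eliminating all coordinates but the first along a closed walk of length `2 * m`
leaves four relations, which are contradictory in characteristic three if `m ≤ 5`.
-/

open Finset Polynomial

/-- `G` contains none of the even cycles `C₄, C₆, …, C₂ₖ`. -/
def EvenCycleFree {V : Type*} (k : ℕ) (G : SimpleGraph V) : Prop :=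
  ∀ m, 2 ≤ m → m ≤ k → ¬ ContainsCopy (cycGraph (2 * m)) G

theorem evenCycleFree_five_iff {V : Type*} {G : SimpleGraph V} :
    EvenCycleFree 5 G ↔ ¬ ContainsCopy (cycGraph 4) G ∧ ¬ ContainsCopy (cycGraph 6) G ∧
      ¬ ContainsCopy (cycGraph 8) G ∧ ¬ ContainsCopy (cycGraph 10) G := by
  refine ⟨fun h => ⟨h 2 ?_ ?_, h 3 ?_ ?_, h 4 ?_ ?_, h 5 ?_ ?_⟩, ?_⟩
  any_goals norm_num
  intro h₄ h₆ h₈ h₁₀ m hm hm₅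
  interval_cases m <;> assumption

/-- `AdmitsCompletePartition k r s` says that some finite graph without `C₄, C₆, …, C₂ₖ` has a
complete partition into `r` parts of size at most `s`; the vertex set is normalised to `Fin n` as
in the definition of `fC4C6C8C10`. -/
def AdmitsCompletePartition (k r s : ℕ) : Prop :=
  ∃ (n : ℕ) (G : SimpleGraph (Fin n)), EvenCycleFree k G ∧
    ∃ c : Fin n → Fin r, IsCompletePartition G c ∧ ∀ i, {v | c v = i}.ncard ≤ s

theorem fC4C6C8C10_eq_sInf (r : ℕ) : fC4C6C8C10 r = sInf {s | AdmitsCompletePartition 5 r s} := by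
  simp only [fC4C6C8C10, AdmitsCompletePartition, evenCycleFree_five_iff, and_assoc]

theorem AdmitsCompletePartition.fC4C6C8C10_le {r s : ℕ} (h : AdmitsCompletePartition 5 r s) :
    fC4C6C8C10 r ≤ s := by
  rw [fC4C6C8C10_eq_sInf]
  exact Nat.sInf_le h

theorem AdmitsCompletePartition.admitsCompletePartition_fC4C6C8C10 {r s : ℕ}
    (h : AdmitsCompletePartition 5 r s) : AdmitsCompletePartition 5 r (fC4C6C8C10 r) := by
  have hmem : sInf {t | AdmitsCompletePartition 5 r t} ∈ {t | AdmitsCompletePartition 5 r t} :=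
    Nat.sInf_mem ⟨s, h⟩
  rwa [← fC4C6C8C10_eq_sInf] at hmem

theorem admitsCompletePartition_of_finite {V ι : Type*} [Finite V] {k r s : ℕ} {G : SimpleGraph V}
    (hG : EvenCycleFree k G) (ψ : ι ≃ Fin r) {c : V → ι}
    (hc : ∀ i j, i ≠ j → ∃ u v, c u = i ∧ c v = j ∧ G.Adj u v)
    (hcard : ∀ i, {v | c v = i}.ncard ≤ s) : AdmitsCompletePartition k r s := by
  obtain ⟨n, ⟨φ⟩⟩ := Finite.exists_equiv_fin V
  refine ⟨n, G.comap φ.symm, fun m hm hmk ⟨f, hf⟩ => hG m hm hmk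
    ⟨(SimpleGraph.Iso.comap φ.symm G).toHom.comp f, φ.symm.injective.comp hf⟩,
    ψ ∘ c ∘ φ.symm, fun i j hij => ?_, fun i => ?_⟩
  · obtain ⟨u, v, hu, hv, huv⟩ := hc _ _ (ψ.symm.injective.ne hij)
    exact ⟨φ u, φ v, by simp [hu], by simp [hv], by simpa using huv⟩
  · have hfibre : {v | (ψ ∘ c ∘ φ.symm) v = i} = φ '' {v | c v = ψ.symm i} := by
      ext v
      simp [Equiv.eq_symm_apply]
    rw [hfibre, Set.ncard_image_of_injective _ φ.injective]
    exact hcard _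

/-! ### Geodesics in graphs without short even cycles -/

section Geodesics

variable {V : Type*} {G : SimpleGraph V} {u x y z : V} {j k : ℕ}

theorem containsCopy_cycGraph_of_isPath {p : G.Walk x z} (hp : p.IsPath) (hzx : G.Adj z x)
    (hlen : 2 ≤ p.length) : ContainsCopy (cycGraph (p.length + 1)) G := by
  have : Fact (1 < p.length + 1) := ⟨by omega⟩
  have hadj (i : ZMod (p.length + 1)) : G.Adj (p.getVert i.val) (p.getVert (i + 1).val) := by
    obtain hlt | heq : i.val < p.length ∨ i.val = p.length := by
      have := ZMod.val_lt i
      omega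
    · rw [ZMod.val_add_of_lt (by rw [ZMod.val_one]; omega), ZMod.val_one]
      exact p.adj_getVert_succ hlt
    · have hwrap : i + 1 = 0 := by
        rw [← ZMod.natCast_zmod_val i, heq]
        exact_mod_cast ZMod.natCast_self (p.length + 1)
      rwa [hwrap, heq, ZMod.val_zero, p.getVert_length, p.getVert_zero]
  refine ⟨⟨fun i => p.getVert i.val, fun {i j} hij => ?_⟩, fun i j hij => ?_⟩
  · obtain rfl | rfl := hij.2
    exacts [hadj i, (hadj j).symm]
  · exact ZMod.val_injective _ (hp.getVert_injOn (Nat.lt_succ_iff.1 (ZMod.val_lt i))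
      (Nat.lt_succ_iff.1 (ZMod.val_lt j)) hij)

theorem exists_adj_dist_eq (h : G.dist u y = j + 1) : ∃ x, G.Adj x y ∧ G.dist u x = j := by
  have hreach : G.Reachable u y := .of_dist_ne_zero (by omega)
  obtain ⟨p, hp⟩ := hreach.exists_walk_length_eq_dist
  have hadj : G.Adj p.penultimate y :=
    p.adj_penultimate (by rw [← SimpleGraph.Walk.length_eq_zero_iff]; omega)
  refine ⟨p.penultimate, hadj, ?_⟩
  have hle := SimpleGraph.dist_le p.dropLast
  rw [SimpleGraph.Walk.length_dropLast] at hle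
  have := hadj.diff_dist_adj (u := u)
  omega

theorem exists_even_isPath (hne : y ≠ z) (hy : G.Reachable u y) (hz : G.Reachable u z)
    (hyj : G.dist u y = j) (hzj : G.dist u z = j) :
    ∃ m, 1 ≤ m ∧ m ≤ j ∧ ∃ p : G.Walk y z, p.IsPath ∧ p.length = 2 * m ∧
      ∀ x ∈ p.support, x = y ∨ x = z ∨ G.dist u x < j := by
  induction j generalizing y z with
  | zero => exact absurd ((hy.dist_eq_zero_iff.1 hyj).symm.trans (hz.dist_eq_zero_iff.1 hzj)) hne
  | succ j ih =>
    obtain ⟨y', hyy', hy'⟩ := exists_adj_dist_eq hyj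
    obtain ⟨z', hzz', hz'⟩ := exists_adj_dist_eq hzj
    obtain rfl | hne' := eq_or_ne y' z'
    · refine ⟨1, le_rfl, by omega, .cons hyy'.symm (.cons hzz' .nil), ?_, rfl, ?_⟩
      · simp [SimpleGraph.Walk.isPath_def, hne, hyy'.ne', hzz'.ne]
      · simp [hy']
    · obtain ⟨m, hm, hmj, p, hp, hlen, hsupp⟩ :=
        ih hne' (hy.trans hyy'.symm.reachable) (hz.trans hzz'.symm.reachable) hy' hz'
      have hlt : ∀ x ∈ p.support, G.dist u x < j + 1 := fun x hx => by
        obtain rfl | rfl | h := hsupp x hx <;> omega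
      have hyp : y ∉ p.support := fun h => (hlt y h).ne hyj
      have hzp : z ∉ p.support := fun h => (hlt z h).ne hzj
      refine ⟨m + 1, by omega, by omega, .cons hyy'.symm (p.concat hzz'), ?_, ?_, fun x hx => ?_⟩
      · rw [SimpleGraph.Walk.cons_isPath_iff]
        exact ⟨hp.concat hzp hzz', by simp [SimpleGraph.Walk.support_concat, hyp, hne]⟩
      · simp only [SimpleGraph.Walk.length_cons, SimpleGraph.Walk.length_concat, hlen]
        ring
      · simp only [SimpleGraph.Walk.support_cons, SimpleGraph.Walk.support_concat,
          List.mem_cons, List.mem_append, List.not_mem_nil, or_false] at hx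
        grind

theorem EvenCycleFree.eq_of_adj_of_dist_eq (hG : EvenCycleFree (k + 1) G) (hjk : j ≤ k)
    (hx : G.Reachable u x) (hjx : j ≤ G.dist u x) (hxy : G.Adj x y) (hxz : G.Adj x z)
    (hy : G.dist u y = j) (hz : G.dist u z = j) : y = z := by
  by_contra hne
  obtain ⟨m, hm, hmj, p, hp, hlen, hsupp⟩ :=
    exists_even_isPath hne (hx.trans hxy.reachable) (hx.trans hxz.reachable) hy hz
  have hxp : x ∉ p.support := fun h => by
    obtain rfl | rfl | hlt := hsupp x h
    exacts [hxy.ne rfl, hxz.ne rfl, hlt.not_ge hjx]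
  have hpath : (SimpleGraph.Walk.cons hxy p).IsPath :=
    (SimpleGraph.Walk.cons_isPath_iff _ _).2 ⟨hp, hxp⟩
  have hcopy := containsCopy_cycGraph_of_isPath hpath hxz.symm
    (by rw [SimpleGraph.Walk.length_cons]; omega)
  rw [SimpleGraph.Walk.length_cons, hlen, show 2 * m + 1 + 1 = 2 * (m + 1) by ring] at hcopy
  exact hG (m + 1) (by omega) (by omega) hcopy

open Classical in
/-- A neighbour of `y` one step closer to `u`, the last vertex before `y` on a geodesic from `u`.
It takes the junk value `y` if `y = u` or if `y` is not reachable from `u`. -/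
noncomputable def parent (G : SimpleGraph V) (u y : V) : V :=
  if h : ∃ x, G.Adj x y ∧ G.dist u y = G.dist u x + 1 then h.choose else y

theorem adj_parent_and_dist_parent (h : G.dist u y = j + 1) :
    G.Adj (parent G u y) y ∧ G.dist u (parent G u y) = j := by
  have hex : ∃ x, G.Adj x y ∧ G.dist u y = G.dist u x + 1 := by
    obtain ⟨x, hxy, hx⟩ := exists_adj_dist_eq h
    exact ⟨x, hxy, by omega⟩
  have hparent : parent G u y = hex.choose := dif_pos hex
  have hspec := hex.choose_spec
  rw [← hparent] at hspec
  exact ⟨hspec.1, by omega⟩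

theorem EvenCycleFree.eq_parent (hG : EvenCycleFree (k + 1) G) (hjk : j ≤ k) (hxy : G.Adj x y)
    (hx : G.dist u x = j) (hy : G.dist u y = j + 1) : x = parent G u y := by
  obtain ⟨hadj, hdist⟩ := adj_parent_and_dist_parent hy
  exact hG.eq_of_adj_of_dist_eq hjk (.of_dist_ne_zero (by omega)) (by omega) hxy.symm hadj.symm
    hx hdist

end Geodesics

section GeodesicSums

variable {V : Type*} [Fintype V]

/-- The sum of `f u y` over all pairs `(u, y)` at distance `j`. -/
noncomputable def distSum (G : SimpleGraph V) (j : ℕ) (f : V → V → ℝ) : ℝ :=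
  ∑ u, ∑ y with G.dist u y = j, f u y

variable {G : SimpleGraph V} {j : ℕ}

theorem distSum_le_distSum {f g : V → V → ℝ} (h : ∀ u y, G.dist u y = j → f u y ≤ g u y) :
    distSum G j f ≤ distSum G j g :=
  sum_le_sum fun u _ => sum_le_sum fun y hy => h u y (mem_filter.1 hy).2

theorem distSum_comm (f : V → V → ℝ) :
    distSum G j f = ∑ y, ∑ u with G.dist u y = j, f u y :=
  sum_comm' (by simp)

theorem distSum_one_le : distSum G j (fun _ _ => 1) ≤ (Fintype.card V : ℝ) ^ 2 := by
  calc distSum G j (fun _ _ => 1) ≤ ∑ _u : V, ∑ _y : V, 1 :=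
        sum_le_sum fun u _ => sum_le_univ_sum_of_nonneg fun _ => zero_le_one
    _ = (Fintype.card V : ℝ) ^ 2 := by simp [sq]

variable (G) [DecidableRel G.Adj]

/-- The number of neighbours of `x` that are farther from `u` than `x`. -/
noncomputable def forwardDegree (u x : V) : ℕ :=
  #{y ∈ G.neighborFinset x | G.dist u y = G.dist u x + 1}

/-- The product of the inverse degrees of the last `j` vertices before `y` on a geodesic from `u`,
that is, of all its inner vertices if `G.dist u y = j + 1`. -/
noncomputable def invDegreeProd : ℕ → V → V → ℝ
  | 0, _, _ => 1
  | j + 1, u, y => invDegreeProd j u (parent G u y) * (G.degree (parent G u y) : ℝ)⁻¹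

/-- The sum of the inverse degrees of the last `j` vertices before `y` on a geodesic from `u`,
that is, of all its inner vertices if `G.dist u y = j + 1`. -/
noncomputable def invDegreeSum : ℕ → V → V → ℝ
  | 0, _, _ => 0
  | j + 1, u, y => invDegreeSum j u (parent G u y) + (G.degree (parent G u y) : ℝ)⁻¹

variable {G} {k : ℕ} {u x y : V}

theorem invDegreeProd_nonneg : 0 ≤ invDegreeProd G j u y := by
  induction j generalizing y with
  | zero => exact zero_le_one
  | succ j ih => exact mul_nonneg ih (by positivity)

theorem invDegreeSum_nonneg : 0 ≤ invDegreeSum G j u y := by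
  induction j generalizing y with
  | zero => exact le_rfl
  | succ j ih => exact add_nonneg ih (by positivity)

theorem forwardDegree_le_degree : forwardDegree G u x ≤ G.degree x :=
  (card_filter_le _ _).trans_eq (G.card_neighborFinset_eq_degree x)

theorem EvenCycleFree.degree_le_forwardDegree_add_two (hG : EvenCycleFree (k + 1) G)
    (hpos : G.dist u x ≠ 0) (hk : G.dist u x ≤ k) : G.degree x ≤ forwardDegree G u x + 2 := by
  classical
  have hreach : G.Reachable u x := .of_dist_ne_zero hpos
  have hunique {i : ℕ} (hi : i ≤ G.dist u x) : #{y ∈ G.neighborFinset x | G.dist u y = i} ≤ 1 := by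
    refine card_le_one.2 fun y hy z hz => ?_
    rw [mem_filter, SimpleGraph.mem_neighborFinset] at hy hz
    exact hG.eq_of_adj_of_dist_eq (hi.trans hk) hreach hi hy.1 hz.1 hy.2 hz.2
  have hcover : G.neighborFinset x ⊆ {y ∈ G.neighborFinset x | G.dist u y = G.dist u x + 1} ∪
      ({y ∈ G.neighborFinset x | G.dist u y = G.dist u x} ∪
        {y ∈ G.neighborFinset x | G.dist u y = G.dist u x - 1}) := by
    intro y hy
    have := ((G.mem_neighborFinset x y).1 hy).diff_dist_adj (u := u)
    simp only [mem_union, mem_filter, hy, true_and]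
    tauto
  have hcard := (card_le_card hcover).trans (card_union_le _ _)
  have hcard' := card_union_le {y ∈ G.neighborFinset x | G.dist u y = G.dist u x}
    {y ∈ G.neighborFinset x | G.dist u y = G.dist u x - 1}
  rw [G.card_neighborFinset_eq_degree] at hcard
  have := hunique le_rfl
  have := hunique (Nat.sub_le _ 1)
  unfold forwardDegree
  omega

theorem EvenCycleFree.distSum_succ (hG : EvenCycleFree (k + 1) G) (hjk : j ≤ k)
    (f : V → V → ℝ) :
    distSum G (j + 1) (fun u y => f u (parent G u y)) =
      distSum G j (fun u x => forwardDegree G u x * f u x) := by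
  refine sum_congr rfl fun u _ => ?_
  calc ∑ y with G.dist u y = j + 1, f u (parent G u y)
      = ∑ y with G.dist u y = j + 1, ∑ x ∈ {parent G u y}, f u x := by
        simp only [sum_singleton]
    _ = ∑ x with G.dist u x = j,
          ∑ y ∈ G.neighborFinset x with G.dist u y = G.dist u x + 1, f u x := by
        refine sum_comm' fun y x => ?_
        simp only [mem_filter, mem_univ, true_and, mem_singleton, SimpleGraph.mem_neighborFinset]
        constructor
        · rintro ⟨hy, rfl⟩
          obtain ⟨hadj, hdist⟩ := adj_parent_and_dist_parent hy
          exact ⟨⟨hadj, hdist ▸ hy⟩, hdist⟩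
        · rintro ⟨⟨hxy, hy⟩, hx⟩
          rw [hx] at hy
          exact ⟨hy, hG.eq_parent hjk hxy hx hy⟩
    _ = ∑ x with G.dist u x = j, forwardDegree G u x * f u x := by
        simp only [sum_const, nsmul_eq_mul, forwardDegree]

theorem distSum_one_one : distSum G 1 (fun _ _ => 1) = ∑ u, (G.degree u : ℝ) := by
  refine sum_congr rfl fun u _ => ?_
  rw [sum_const, nsmul_one, ← G.card_neighborFinset_eq_degree]
  congr 2
  ext y
  simp [SimpleGraph.dist_eq_one_iff_adj]

theorem sum_invDegreeProd_le_degree (j : ℕ) (y : V) :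
    ∑ u with G.dist u y = j + 1, invDegreeProd G j u y ≤ G.degree y := by
  induction j generalizing y with
  | zero =>
    refine le_of_eq ?_
    simp only [zero_add, invDegreeProd]
    rw [sum_const, nsmul_one, ← G.card_neighborFinset_eq_degree]
    congr 2
    ext u
    simp [SimpleGraph.dist_eq_one_iff_adj, G.adj_comm u]
  | succ j ih =>
    let g (u x : V) : ℝ := invDegreeProd G j u x * (G.degree x : ℝ)⁻¹
    have hg (u x : V) : 0 ≤ g u x := mul_nonneg invDegreeProd_nonneg (by positivity)
    calc ∑ u with G.dist u y = j + 2, g u (parent G u y)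
        ≤ ∑ u with G.dist u y = j + 2, ∑ x ∈ G.neighborFinset y with G.dist u x = j + 1, g u x := by
          refine sum_le_sum fun u hu => single_le_sum (f := g u) (fun x _ => hg u x) ?_
          obtain ⟨hadj, hdist⟩ := adj_parent_and_dist_parent (mem_filter.1 hu).2
          simpa using ⟨hadj.symm, hdist⟩
      _ ≤ ∑ u, ∑ x ∈ G.neighborFinset y with G.dist u x = j + 1, g u x :=
          sum_le_univ_sum_of_nonneg fun u => sum_nonneg fun x _ => hg u x
      _ = ∑ x ∈ G.neighborFinset y, (∑ u with G.dist u x = j + 1, invDegreeProd G j u x) *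
            (G.degree x : ℝ)⁻¹ := by
          simp only [sum_mul]
          exact sum_comm' (by simp [and_comm])
      _ ≤ ∑ x ∈ G.neighborFinset y, 1 :=
          sum_le_sum fun x _ => mul_inv_le_one_of_le₀ (ih x) (by positivity)
      _ = G.degree y := by simp

theorem distSum_invDegreeProd_mul_inv_degree_le (j : ℕ) :
    distSum G (j + 1) (fun u y => invDegreeProd G j u y * (G.degree y : ℝ)⁻¹) ≤
      Fintype.card V := by
  calc distSum G (j + 1) (fun u y => invDegreeProd G j u y * (G.degree y : ℝ)⁻¹)
      = ∑ y, (∑ u with G.dist u y = j + 1, invDegreeProd G j u y) * (G.degree y : ℝ)⁻¹ := by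
        simp only [distSum_comm, sum_mul]
    _ ≤ ∑ y : V, 1 :=
        sum_le_sum fun y _ =>
          mul_inv_le_one_of_le₀ (sum_invDegreeProd_le_degree j y) (by positivity)
    _ = Fintype.card V := by simp

theorem EvenCycleFree.sum_degree_le_distSum_invDegreeProd (hG : EvenCycleFree (k + 1) G)
    (hjk : j ≤ k) :
    ∑ u, (G.degree u : ℝ) - 2 * j * Fintype.card V ≤ distSum G (j + 1) (invDegreeProd G j) := by
  induction j with
  | zero => simp [← distSum_one_one, invDegreeProd]
  | succ j ih =>
    let g (u x : V) : ℝ := invDegreeProd G j u x * (G.degree x : ℝ)⁻¹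
    have hstep : distSum G (j + 1) (fun u x => invDegreeProd G j u x - 2 * g u x) ≤
        distSum G (j + 1) (fun u x => forwardDegree G u x * g u x) := by
      refine distSum_le_distSum fun u x hx => ?_
      have hdeg : 0 < (G.degree x : ℝ) := by
        obtain ⟨hadj, -⟩ := adj_parent_and_dist_parent hx
        exact_mod_cast (G.degree_pos_iff_exists_adj x).2 ⟨_, hadj.symm⟩
      have hforward : (G.degree x : ℝ) ≤ forwardDegree G u x + 2 := by
        exact_mod_cast hG.degree_le_forwardDegree_add_two (by omega) (by omega)
      have hg : 0 ≤ g u x := mul_nonneg invDegreeProd_nonneg (by positivity)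
      have hprod : invDegreeProd G j u x = G.degree x * g u x := by
        simp only [g]
        field_simp
      rw [hprod, ← sub_mul]
      exact mul_le_mul_of_nonneg_right (by linarith) hg
    have hloss : distSum G (j + 1) g ≤ Fintype.card V :=
      distSum_invDegreeProd_mul_inv_degree_le j
    calc _ ≤ distSum G (j + 1) (invDegreeProd G j) - 2 * distSum G (j + 1) g := by
          push_cast
          linarith [ih (by omega)]
      _ = distSum G (j + 1) (fun u x => invDegreeProd G j u x - 2 * g u x) := by
          simp only [distSum, sum_sub_distrib, mul_sum]
      _ ≤ distSum G (j + 1) (fun u x => forwardDegree G u x * g u x) := hstep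
      _ = distSum G (j + 2) (invDegreeProd G (j + 1)) := (hG.distSum_succ hjk g).symm

theorem EvenCycleFree.distSum_invDegreeProd_mul_invDegreeSum_le (hG : EvenCycleFree (k + 1) G)
    (hjk : j ≤ k) :
    distSum G (j + 1) (fun u y => invDegreeProd G j u y * invDegreeSum G j u y) ≤
      j * Fintype.card V := by
  induction j with
  | zero => simp [distSum, invDegreeSum]
  | succ j ih =>
    let i (x : V) : ℝ := (G.degree x : ℝ)⁻¹
    have hstep (u x : V) :
        forwardDegree G u x * (invDegreeProd G j u x * i x * (invDegreeSum G j u x + i x)) ≤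
          invDegreeProd G j u x * invDegreeSum G j u x + invDegreeProd G j u x * i x := by
      have hforward : forwardDegree G u x * i x ≤ 1 :=
        mul_inv_le_one_of_le₀ (mod_cast forwardDegree_le_degree) (by positivity)
      have hnonneg : 0 ≤ invDegreeProd G j u x * (invDegreeSum G j u x + i x) :=
        mul_nonneg invDegreeProd_nonneg (add_nonneg invDegreeSum_nonneg (by positivity))
      calc _ = forwardDegree G u x * i x *
              (invDegreeProd G j u x * (invDegreeSum G j u x + i x)) := by ring
        _ ≤ invDegreeProd G j u x * (invDegreeSum G j u x + i x) :=
            mul_le_of_le_one_left hnonneg hforward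
        _ = _ := mul_add _ _ _
    calc distSum G (j + 2) (fun u y => invDegreeProd G (j + 1) u y * invDegreeSum G (j + 1) u y)
        = distSum G (j + 1) (fun u x => forwardDegree G u x *
            (invDegreeProd G j u x * i x * (invDegreeSum G j u x + i x))) :=
          hG.distSum_succ hjk fun u x =>
            invDegreeProd G j u x * i x * (invDegreeSum G j u x + i x)
      _ ≤ distSum G (j + 1) (fun u x =>
            invDegreeProd G j u x * invDegreeSum G j u x + invDegreeProd G j u x * i x) :=
          distSum_le_distSum fun u x _ => hstep u x
      _ = distSum G (j + 1) (fun u x => invDegreeProd G j u x * invDegreeSum G j u x) +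
            distSum G (j + 1) (fun u x => invDegreeProd G j u x * i x) := by
          simp only [distSum, sum_add_distrib]
      _ ≤ (j + 1 : ℕ) * Fintype.card V := by
          push_cast
          linarith [ih (by omega), distSum_invDegreeProd_mul_inv_degree_le (G := G) j]

theorem pow_mul_invDegreeProd_le_exp {d : ℝ} (hd : 0 ≤ d) :
    d ^ j * invDegreeProd G j u y ≤ Real.exp (d * invDegreeSum G j u y - j) := by
  induction j generalizing y with
  | zero => simp [invDegreeProd, invDegreeSum]
  | succ j ih =>
    let x := parent G u y
    let i : ℝ := (G.degree x : ℝ)⁻¹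
    calc d ^ (j + 1) * (invDegreeProd G j u x * i)
        = d ^ j * invDegreeProd G j u x * (d * i) := by ring
      _ ≤ Real.exp (d * invDegreeSum G j u x - j) * Real.exp (d * i - 1) :=
          mul_le_mul ih (by linarith [Real.add_one_le_exp (d * i - 1)]) (by positivity)
            (Real.exp_nonneg _)
      _ = Real.exp (d * (invDegreeSum G j u x + i) - (j + 1 : ℕ)) := by
          rw [← Real.exp_add]
          congr 1
          push_cast
          ring

theorem pow_mul_invDegreeProd_mul_le_one {d : ℝ} (hd : 0 ≤ d) :
    d ^ j * invDegreeProd G j u y * (j + 1 - d * invDegreeSum G j u y) ≤ 1 := by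
  let t := j - d * invDegreeSum G j u y
  calc d ^ j * invDegreeProd G j u y * (j + 1 - d * invDegreeSum G j u y)
      ≤ d ^ j * invDegreeProd G j u y * Real.exp t :=
        mul_le_mul_of_nonneg_left (by linarith [Real.add_one_le_exp t])
          (mul_nonneg (pow_nonneg hd j) invDegreeProd_nonneg)
    _ ≤ Real.exp (-t) * Real.exp t := by
        refine mul_le_mul_of_nonneg_right ?_ (Real.exp_nonneg t)
        rw [neg_sub]
        exact pow_mul_invDegreeProd_le_exp hd
    _ = 1 := by rw [← Real.exp_add, neg_add_cancel, Real.exp_zero]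

theorem EvenCycleFree.pow_mul_sub_le_card [Nonempty V] (hG : EvenCycleFree (k + 1) G) {d : ℝ}
    (hd : 0 ≤ d) (hdeg : d * Fintype.card V ≤ ∑ u, (G.degree u : ℝ)) :
    d ^ k * (d - 2 * k * (k + 1)) ≤ Fintype.card V := by
  let n : ℝ := Fintype.card V
  let P := distSum G (k + 1) (invDegreeProd G k)
  let Q := distSum G (k + 1) (fun u y => invDegreeProd G k u y * invDegreeSum G k u y)
  have hP : d * n - 2 * k * n ≤ P := by
    linarith [hG.sum_degree_le_distSum_invDegreeProd le_rfl]
  have hQ : Q ≤ k * n := hG.distSum_invDegreeProd_mul_invDegreeSum_le le_rfl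
  have hn : 0 < n := Nat.cast_pos.2 Fintype.card_pos
  refine le_of_mul_le_mul_left ?_ hn
  calc n * (d ^ k * (d - 2 * k * (k + 1)))
      = d ^ k * ((k + 1) * (d * n - 2 * k * n) - d * (k * n)) := by ring
    _ ≤ d ^ k * ((k + 1) * P - d * Q) := by gcongr
    _ = distSum G (k + 1) fun u y =>
          d ^ k * invDegreeProd G k u y * (k + 1 - d * invDegreeSum G k u y) := by
        simp only [P, Q, distSum, mul_sum, ← sum_sub_distrib]
        refine sum_congr rfl fun u _ => sum_congr rfl fun y _ => by ring
    _ ≤ distSum G (k + 1) fun _ _ => 1 :=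
        distSum_le_distSum fun u y _ => pow_mul_invDegreeProd_mul_le_one hd
    _ ≤ n ^ 2 := distSum_one_le
    _ = n * n := sq n

end GeodesicSums

section CompletePartitions

variable {V : Type*} [Fintype V] {r s : ℕ} {c : V → Fin r}

theorem IsCompletePartition.mul_sub_one_le_sum_degree {G : SimpleGraph V} [DecidableRel G.Adj]
    (hc : IsCompletePartition G c) : r * (r - 1) ≤ ∑ v, G.degree v := by
  calc r * (r - 1) = #(univ : Finset (Fin r)).offDiag := by
        rw [offDiag_card, card_fin, Nat.mul_sub_one]
    _ ≤ #(univ : Finset G.Dart) := by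
        refine card_le_card_of_surjOn (fun e => (c e.fst, c e.snd)) fun ⟨i, j⟩ hij => ?_
        obtain ⟨u, v, hu, hv, huv⟩ := hc i j (by simpa using hij)
        exact ⟨⟨(u, v), huv⟩, by simp, Prod.ext hu hv⟩
    _ = ∑ v, G.degree v := by rw [card_univ, G.dart_card_eq_sum_degrees]

theorem card_le_mul_of_ncard_fibre_le (h : ∀ i, {v | c v = i}.ncard ≤ s) :
    Fintype.card V ≤ r * s := by
  have hcard := card_le_mul_card_image_of_maps_to (s := univ) (f := c) (t := univ)
    (fun _ _ => mem_univ _) s fun i _ => by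
      simpa [Set.ncard_eq_toFinset_card'] using h i
  simpa [mul_comm] using hcard

theorem AdmitsCompletePartition.pow_mul_sub_le {k : ℕ} {d : ℝ}
    (h : AdmitsCompletePartition (k + 1) r s) (hr : 1 < r) (hd : 0 ≤ d) (hds : d * s ≤ r - 1) :
    d ^ k * (d - 2 * k * (k + 1)) ≤ r * s := by
  classical
  obtain ⟨n, G, hG, c, hc, hs⟩ := h
  have hn : (n : ℝ) ≤ r * s := by
    exact_mod_cast Fintype.card_fin n ▸ card_le_mul_of_ncard_fibre_le hs
  have hdeg : (r : ℝ) * (r - 1) ≤ ∑ v, (G.degree v : ℝ) := by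
    rw [← Nat.cast_pred (by omega)]
    exact_mod_cast hc.mul_sub_one_le_sum_degree
  obtain ⟨u, -⟩ := hc ⟨0, by omega⟩ ⟨1, hr⟩ (by simp)
  have : Nonempty (Fin n) := ⟨u⟩
  refine (hG.pow_mul_sub_le_card hd ?_).trans (by rwa [Fintype.card_fin])
  calc d * (Fintype.card (Fin n) : ℝ) ≤ d * (r * s) := by
        rw [Fintype.card_fin]
        gcongr
    _ = r * (d * s) := by ring
    _ ≤ r * (r - 1) := by gcongr
    _ ≤ ∑ v, (G.degree v : ℝ) := hdeg

theorem AdmitsCompletePartition.le_div_sq {q : ℕ} (h : AdmitsCompletePartition 5 (q ^ 3) s)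
    (hq : 1 < q) (hs : s ≤ q ^ 2) :
    (1 - (q : ℝ)⁻¹) ^ 4 * (1 - 41 * (q : ℝ)⁻¹) ≤ s / q ^ 2 := by
  have hq₁ : (1 : ℝ) < q := by exact_mod_cast hq
  have hds : ((q : ℝ) - 1) * s ≤ (q ^ 3 : ℕ) - 1 := by
    calc ((q : ℝ) - 1) * s ≤ (q - 1) * q ^ 2 :=
          mul_le_mul_of_nonneg_left (by exact_mod_cast hs) (by linarith)
      _ ≤ (q ^ 3 : ℕ) - 1 := by
          push_cast
          linarith [one_le_pow₀ hq₁.le (n := 2), (by ring : ((q : ℝ) - 1) * q ^ 2 = q ^ 3 - q ^ 2)]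
  have hbound := h.pow_mul_sub_le (Nat.one_lt_pow three_ne_zero hq) (by linarith) hds
  push_cast at hbound
  calc (1 - (q : ℝ)⁻¹) ^ 4 * (1 - 41 * (q : ℝ)⁻¹)
      = ((q : ℝ) - 1) ^ 4 * (q - 1 - 2 * 4 * (4 + 1)) / (q : ℝ) ^ 5 := by
        field_simp
        ring
    _ ≤ (q : ℝ) ^ 3 * s / (q : ℝ) ^ 5 := by gcongr
    _ = (s : ℝ) / (q : ℝ) ^ 2 := by field_simp

end CompletePartitions

/-! ### The polarity graph of the Ree–Tits hexagon -/

/-- The relations satisfied by the first coordinates along a closed walk of length `2 * m` in the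
polarity graph: `a` lists those of the vertices in odd position, and `κ` the images under `θ` of
those of the vertices in even position. Both sequences are indexed by `ℕ` with period `m`. -/
structure ClosedChain {F : Type*} [Field F] (m : ℕ) (a κ : ℕ → F) : Prop where
  left_periodic : Function.Periodic a m
  right_periodic : Function.Periodic κ m
  left_ne : ∀ i, a i ≠ a (i + 1)
  right_ne : ∀ i, κ i ≠ κ (i + 1)
  sum_pow_mul_sub : ∀ e ≤ 3, ∑ i ∈ range m, a i ^ e * (κ (i + 1) - κ i) = 0
  sum_cube_mul_sq_sub_sq : ∑ i ∈ range m, a i ^ 3 * (κ (i + 1) ^ 2 - κ i ^ 2) = 0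

section ReeTits

variable {F : Type*} [Field F] {m : ℕ} {a κ : ℕ → F}

theorem ClosedChain.sum_eval_mul_sub (h : ClosedChain m a κ) {p : F[X]} (hp : p.natDegree ≤ 3) :
    ∑ i ∈ range m, p.eval (a i) * (κ (i + 1) - κ i) = 0 := by
  simp only [eval_eq_sum_range' (Nat.lt_succ_of_le hp), sum_mul, mul_assoc]
  rw [sum_comm]
  refine sum_eq_zero fun e he => ?_
  rw [← mul_sum, h.sum_pow_mul_sub e (Nat.lt_succ_iff.1 (mem_range.1 he)), mul_zero]

theorem ClosedChain.exists_ne_eq [DecidableEq F] (h : ClosedChain m a κ)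
    (hcard : #((range m).image a) ≤ 4) {i : ℕ} (hi : i < m) : ∃ j < m, j ≠ i ∧ a j = a i := by
  by_contra! hunique
  -- A polynomial vanishing at all the other values of `a` isolates the `i`-th term.
  let values := ((range m).image a).erase (a i)
  let p : F[X] := ∏ v ∈ values, (X - C v)
  have hdeg : p.natDegree ≤ 3 := by
    rw [natDegree_prod_of_monic _ _ fun v _ => monic_X_sub_C v]
    simp only [natDegree_X_sub_C, sum_const, smul_eq_mul, mul_one]
    rw [card_erase_of_mem (mem_image_of_mem a (mem_range.2 hi))]
    omega
  have heval : p.eval (a i) ≠ 0 := by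
    rw [eval_prod, prod_ne_zero_iff]
    intro v hv
    simpa [sub_eq_zero] using (mem_erase.1 hv).1.symm
  have hsum := h.sum_eval_mul_sub hdeg
  rw [sum_eq_single_of_mem i (mem_range.2 hi) fun j hj hji => ?_] at hsum
  · exact mul_ne_zero heval (sub_ne_zero.2 (h.right_ne i).symm) hsum
  · have hj' : a j ∈ values :=
      mem_erase.2 ⟨hunique j (mem_range.1 hj) hji, mem_image_of_mem a hj⟩
    have : p.eval (a j) = 0 := by
      rw [eval_prod]
      exact prod_eq_zero hj' (by simp)
    rw [this, zero_mul]

theorem ClosedChain.sub_const [CharP F 3] (h : ClosedChain m a κ) (α β : F) :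
    ClosedChain m (fun i => a i - α) (fun i => κ i - β) where
  left_periodic i := congrArg (· - α) (h.left_periodic i)
  right_periodic i := congrArg (· - β) (h.right_periodic i)
  left_ne i := by simpa using h.left_ne i
  right_ne i := by simpa using h.right_ne i
  sum_pow_mul_sub e he := by
    have heval (i : ℕ) : ((X - C α) ^ e).eval (a i) = (a i - α) ^ e := by
      rw [eval_pow, eval_sub, eval_X, eval_C]
    have hsum := h.sum_eval_mul_sub (p := (X - C α) ^ e) (by simpa using he)
    simpa only [heval, sub_sub_sub_cancel_right] using hsum
  sum_cube_mul_sq_sub_sq := by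
    have : Fact (Nat.Prime 3) := ⟨Nat.prime_three⟩
    have htelescope : ∑ i ∈ range m, ((κ (i + 1) - β) ^ 2 - (κ i - β) ^ 2) = 0 := by
      rw [sum_range_sub (fun i => (κ i - β) ^ 2), h.right_periodic.eq, sub_self]
    calc ∑ i ∈ range m, (a i - α) ^ 3 * ((κ (i + 1) - β) ^ 2 - (κ i - β) ^ 2)
        = ∑ i ∈ range m, a i ^ 3 * (κ (i + 1) ^ 2 - κ i ^ 2) -
            2 * β * ∑ i ∈ range m, a i ^ 3 * (κ (i + 1) - κ i) -
            α ^ 3 * ∑ i ∈ range m, ((κ (i + 1) - β) ^ 2 - (κ i - β) ^ 2) := by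
          rw [mul_sum, mul_sum, ← sum_sub_distrib, ← sum_sub_distrib]
          refine sum_congr rfl fun i _ => ?_
          rw [sub_pow_char]
          ring
      _ = 0 := by
          rw [h.sum_cube_mul_sq_sub_sq, h.sum_pow_mul_sub 3 le_rfl, htelescope]
          ring

theorem ClosedChain.not_four [CharP F 3] (h : ClosedChain 4 a κ) : False := by
  classical
  have hthree : (3 : F) = 0 := CharP.cast_eq_zero F 3
  have hκ₄ : κ 4 = κ 0 := h.right_periodic 0
  have ha₄ : a 4 = a 0 := h.left_periodic 0
  have ha₀₁ : a 0 ≠ a 1 := h.left_ne 0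
  have ha₃₄ : a 3 ≠ a 4 := h.left_ne 3
  have hκ₀₁ : κ 0 - κ 1 ≠ 0 := sub_ne_zero.2 (h.right_ne 0)
  have hκ₁₂ : κ 1 - κ 2 ≠ 0 := sub_ne_zero.2 (h.right_ne 1)
  have hrep : ∀ i < 4, ∃ j < 4, j ≠ i ∧ a j = a i := fun i hi =>
    h.exists_ne_eq (card_image_le.trans (by simp)) hi
  have ha₂ : a 2 = a 0 := by
    obtain ⟨j, hj, hj₀, hja⟩ := hrep 0 (by norm_num)
    interval_cases j <;> grind
  have ha₃ : a 3 = a 1 := by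
    obtain ⟨j, hj, hj₁, hja⟩ := hrep 1 (by norm_num)
    interval_cases j <;> grind
  have hlin := h.sum_pow_mul_sub 1 (by norm_num)
  have hquad := h.sum_cube_mul_sq_sub_sq
  simp only [sum_range_succ, range_zero, sum_empty, zero_add, Nat.reduceAdd, pow_one, ha₂, ha₃,
    hκ₄] at hlin hquad
  have hκ : κ 1 - κ 0 + κ 3 - κ 2 = 0 := by
    refine (mul_eq_zero.1 ?_).resolve_left (sub_ne_zero.2 ha₀₁)
    linear_combination hlin
  have hκsq : κ 1 ^ 2 - κ 0 ^ 2 + κ 3 ^ 2 - κ 2 ^ 2 = 0 := by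
    refine (mul_eq_zero.1 ?_).resolve_left (pow_ne_zero 3 (sub_ne_zero.2 ha₀₁))
    linear_combination hquad + hthree * (a 0 * a 1 ^ 2 - a 0 ^ 2 * a 1) *
      (κ 1 ^ 2 - κ 0 ^ 2 + κ 3 ^ 2 - κ 2 ^ 2)
  refine mul_ne_zero hκ₀₁ hκ₁₂ ?_
  linear_combination hκsq - (κ 3 + κ 2 + κ 0 - κ 1) * hκ + hthree * ((κ 0 - κ 1) * (κ 1 - κ 2))

theorem ClosedChain.injOn_of_five (h : ClosedChain 5 a κ) : Set.InjOn a (range 5) := by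
  classical
  by_contra hinj
  have hcard : #((range 5).image a) ≤ 4 := by
    have := card_image_le.lt_of_ne (mt card_image_iff.1 hinj)
    simpa [Nat.lt_succ_iff] using this
  have ha₅ : a 5 = a 0 := h.left_periodic 0
  have ha₀₁ : a 0 ≠ a 1 := h.left_ne 0
  have ha₁₂ : a 1 ≠ a 2 := h.left_ne 1
  have ha₂₃ : a 2 ≠ a 3 := h.left_ne 2
  have ha₃₄ : a 3 ≠ a 4 := h.left_ne 3
  have ha₄₅ : a 4 ≠ a 5 := h.left_ne 4
  have hrep : ∀ i < 5, a ((i + 2) % 5) = a i ∨ a ((i + 3) % 5) = a i := by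
    intro i hi
    obtain ⟨j, hj, hji, hja⟩ := h.exists_ne_eq hcard hi
    interval_cases i <;> interval_cases j <;> grind
  have hrep₀ : a 2 = a 0 ∨ a 3 = a 0 := hrep 0 (by norm_num)
  have hrep₁ : a 3 = a 1 ∨ a 4 = a 1 := hrep 1 (by norm_num)
  have hrep₂ : a 4 = a 2 ∨ a 0 = a 2 := hrep 2 (by norm_num)
  have hrep₃ : a 0 = a 3 ∨ a 1 = a 3 := hrep 3 (by norm_num)
  have hrep₄ : a 1 = a 4 ∨ a 2 = a 4 := hrep 4 (by norm_num)
  grind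

-- The linear relations form a Vandermonde system, so Lagrange interpolation gives the differences
-- of consecutive `κ i` up to a common factor `t`; the left side is the quadratic relation, summed
-- by parts, at that solution.
theorem sum_cube_mul_sq_lagrange_solution [CharP F 3] {a b c d t : F}
    (ha : a ≠ 0) (hb : b ≠ 0) (hc : c ≠ 0) (hd : d ≠ 0) (hab : a - b ≠ 0) (hac : a - c ≠ 0)
    (had : a - d ≠ 0) (hbc : b - c ≠ 0) (hbd : b - d ≠ 0) (hcd : c - d ≠ 0) :
    (a - b) ^ 3 * (t / (a * (a - b) * (a - c) * (a - d))) ^ 2 +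
      (b - c) ^ 3 * (t / (a * (a - b) * (a - c) * (a - d)) -
        t / (b * (a - b) * (b - c) * (b - d))) ^ 2 +
      (c - d) ^ 3 * (t / (d * (a - d) * (b - d) * (c - d)) - t / (a * b * c * d)) ^ 2 +
      d ^ 3 * (t / (a * b * c * d)) ^ 2 = t ^ 2 / ((a - c) * (b - d) * c * (a - d) * b) := by
  have hthree : (3 : F) = 0 := CharP.cast_eq_zero F 3
  field_simp
  clear * - hthree
  grind

theorem eq_zero_of_five_term_relations [CharP F 3] {a b c d k₁ k₂ k₃ k₄ : F}
    (ha : a ≠ 0) (hb : b ≠ 0) (hc : c ≠ 0) (hd : d ≠ 0) (hab : a - b ≠ 0) (hac : a - c ≠ 0)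
    (had : a - d ≠ 0) (hbc : b - c ≠ 0) (hbd : b - d ≠ 0) (hcd : c - d ≠ 0)
    (h₁ : a * k₁ + b * (k₂ - k₁) + c * (k₃ - k₂) + d * (k₄ - k₃) = 0)
    (h₂ : a ^ 2 * k₁ + b ^ 2 * (k₂ - k₁) + c ^ 2 * (k₃ - k₂) + d ^ 2 * (k₄ - k₃) = 0)
    (h₃ : a ^ 3 * k₁ + b ^ 3 * (k₂ - k₁) + c ^ 3 * (k₃ - k₂) + d ^ 3 * (k₄ - k₃) = 0)
    (hquad : a ^ 3 * k₁ ^ 2 + b ^ 3 * (k₂ ^ 2 - k₁ ^ 2) + c ^ 3 * (k₃ ^ 2 - k₂ ^ 2) +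
      d ^ 3 * (k₄ ^ 2 - k₃ ^ 2) = 0) : k₁ = 0 := by
  have hthree : (3 : F) = 0 := CharP.cast_eq_zero F 3
  obtain ⟨t, ht⟩ : ∃ t, t = k₁ * (a * (a - b) * (a - c) * (a - d)) := ⟨_, rfl⟩
  have hk₁ : k₁ = t / (a * (a - b) * (a - c) * (a - d)) := by
    rw [ht]
    field_simp
  have hk₂ : k₂ = k₁ - t / (b * (a - b) * (b - c) * (b - d)) := by
    field_simp
    linear_combination (a - b) * (h₃ - (c + d) * h₂ + c * d * h₁) + ht
  have hk₄ : k₄ = -(t / (a * b * c * d)) := by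
    field_simp
    linear_combination a * (h₃ - (b + c + d) * h₂ + (b * c + b * d + c * d) * h₁) + ht
  have hk₃ : k₃ = t / (d * (a - d) * (b - d) * (c - d)) - t / (a * b * c * d) := by
    rw [sub_eq_add_neg, ← hk₄]
    field_simp
    linear_combination -(a - d) * (h₃ - (b + c) * h₂ + b * c * h₁) - ht
  have hcubes : (a - b) ^ 3 * k₁ ^ 2 + (b - c) ^ 3 * k₂ ^ 2 + (c - d) ^ 3 * k₃ ^ 2 +
      d ^ 3 * k₄ ^ 2 = 0 := by
    linear_combination hquad + hthree * ((a * b ^ 2 - a ^ 2 * b) * k₁ ^ 2 +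
      (b * c ^ 2 - b ^ 2 * c) * k₂ ^ 2 + (c * d ^ 2 - c ^ 2 * d) * k₃ ^ 2)
  rw [hk₃, hk₄, neg_sq, hk₂, hk₁, sum_cube_mul_sq_lagrange_solution ha hb hc hd hab hac had hbc
    hbd hcd, div_eq_zero_iff, or_iff_left (by simp [*]), sq_eq_zero_iff] at hcubes
  rw [hk₁, hcubes, zero_div]

theorem ClosedChain.not_five_of_eq_zero [CharP F 3] (h : ClosedChain 5 a κ) (ha₄ : a 4 = 0)
    (hκ₀ : κ 0 = 0) : False := by
  have hne {i j : ℕ} (hi : i < 5) (hj : j < 5) (hij : i ≠ j) : a i - a j ≠ 0 :=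
    sub_ne_zero.2 (h.injOn_of_five.ne (by simpa using hi) (by simpa using hj) hij)
  have hne₄ {i : ℕ} (hi : i < 4) : a i ≠ 0 := by
    simpa [ha₄] using hne (i := i) (j := 4) (by omega) (by norm_num) (by omega)
  have hκ₅ : κ 5 = 0 := (h.right_periodic 0).trans hκ₀
  have hpow₁ := h.sum_pow_mul_sub 1 (by norm_num)
  have hpow₂ := h.sum_pow_mul_sub 2 (by norm_num)
  have hpow₃ := h.sum_pow_mul_sub 3 le_rfl
  have hquad := h.sum_cube_mul_sq_sub_sq
  simp only [sum_range_succ, range_zero, sum_empty, zero_add, Nat.reduceAdd, ha₄, hκ₀, hκ₅,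
    sub_zero, zero_sub, zero_mul, add_zero, pow_one, ne_eq, OfNat.ofNat_ne_zero, not_false_eq_true,
    zero_pow] at hpow₁ hpow₂ hpow₃ hquad
  have hκ₁ : κ 1 = 0 := by
    apply eq_zero_of_five_term_relations (a := a 0) (b := a 1) (c := a 2) (d := a 3) <;>
      first
      | assumption
      | exact hne₄ (by norm_num)
      | exact hne (by norm_num) (by norm_num) (by norm_num)
  exact h.right_ne 0 (hκ₀.trans hκ₁.symm)

theorem ClosedChain.not_five [CharP F 3] (h : ClosedChain 5 a κ) : False :=
  (h.sub_const (a 4) (κ 0)).not_five_of_eq_zero (sub_self _) (sub_self _)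

theorem ClosedChain.three_lt (h : ClosedChain m a κ) (hm : 2 ≤ m) : 3 < m := by
  classical
  by_contra! hm₃
  obtain ⟨j, hj, hj₀, hja⟩ :=
    h.exists_ne_eq (i := 0) (card_image_le.trans (by simpa using by omega)) (by omega)
  obtain rfl | hlast : j = 1 ∨ j + 1 = m := by omega
  · exact h.left_ne 0 hja.symm
  · exact h.left_ne j (by rw [hlast, hja, h.left_periodic.eq])

theorem ClosedChain.five_lt [CharP F 3] (h : ClosedChain m a κ) (hm : 2 ≤ m) : 5 < m := by
  by_contra! hm₅
  obtain rfl | rfl : m = 4 ∨ m = 5 := by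
    have := h.three_lt hm
    omega
  · exact h.not_four
  · exact h.not_five

/-- The half of the adjacency relation of the polarity graph of the Ree–Tits hexagon that
determines the last two coordinates of `y` from `x` and the first three coordinates of `y`. -/
def HalfIncident (θ : F →+* F) (x y : (Fin 3 → F) × F × F) : Prop :=
  y.2.1 = θ (x.1 0) * y.1 0 + x.1 1 ∧ y.2.2 = x.1 0 ^ 2 * θ (y.1 0) + x.1 2 + x.1 0 * x.2.1

/-- The affine part of the polarity graph of the Ree–Tits generalised hexagon attached to an
endomorphism `θ` of `F` with `θ ∘ θ = (· ^ 3)`. -/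
def polarityGraph (θ : F →+* F) : SimpleGraph ((Fin 3 → F) × F × F) where
  Adj x y := x ≠ y ∧ HalfIncident θ x y ∧ HalfIncident θ y x
  symm := ⟨fun _ _ h => ⟨h.1.symm, h.2.2, h.2.1⟩⟩
  loopless := ⟨fun _ h => h.1 rfl⟩

section PolarityGraph

variable {θ : F →+* F} {x y z : (Fin 3 → F) × F × F}

theorem apply_mul_sub_of_adj_of_adj (hxy : (polarityGraph θ).Adj x y)
    (hyz : (polarityGraph θ).Adj y z) : θ (y.1 0) * (z.1 0 - x.1 0) = z.2.1 - x.2.1 := by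
  linear_combination hxy.2.2.1 - hyz.2.1.1

theorem apply_mul_sq_sub_sq_of_adj_of_adj (hxy : (polarityGraph θ).Adj x y)
    (hyz : (polarityGraph θ).Adj y z) :
    θ (y.1 0) * (z.1 0 ^ 2 - x.1 0 ^ 2) =
      -(z.1 2 + z.1 0 * z.2.1) - -(x.1 2 + x.1 0 * x.2.1) := by
  linear_combination hxy.2.1.2 - hyz.2.2.2

theorem fst_zero_ne_of_adj_of_adj (hxy : (polarityGraph θ).Adj x y)
    (hyz : (polarityGraph θ).Adj y z) (hxz : x ≠ z) : x.1 0 ≠ z.1 0 := by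
  intro h₀
  have h₃ : x.2.1 = z.2.1 := by
    linear_combination apply_mul_sub_of_adj_of_adj hxy hyz + θ (y.1 0) * h₀
  have h₂ : x.1 2 = z.1 2 := by
    linear_combination -apply_mul_sq_sub_sq_of_adj_of_adj hxy hyz -
      (θ (y.1 0) * (x.1 0 + z.1 0) + x.2.1) * h₀ - z.1 0 * h₃
  have h₁ : x.1 1 = z.1 1 := by
    linear_combination hyz.2.2.1 - hxy.2.1.1 - congrArg θ h₀ * y.1 0
  have h₄ : x.2.2 = z.2.2 := by
    linear_combination hxy.2.2.2 - hyz.2.1.2 + y.1 0 ^ 2 * congrArg θ h₀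
  refine hxz (Prod.ext (funext fun i => ?_) (Prod.ext h₃ h₄))
  fin_cases i
  exacts [h₀, h₁, h₂]

/-- A closed walk in `G` of length `n` that never turns back, as an `n`-periodic sequence of
vertices. A copy of `cycGraph n` with `n ≥ 3` gives one. -/
structure IsNonbacktracking {V : Type*} (G : SimpleGraph V) (n : ℕ) (v : ℕ → V) : Prop where
  periodic : Function.Periodic v n
  adj : ∀ i, G.Adj (v i) (v (i + 1))
  ne : ∀ i, v i ≠ v (i + 2)

theorem ContainsCopy.exists_isNonbacktracking {V : Type*} {G : SimpleGraph V} {n : ℕ}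
    (h : ContainsCopy (cycGraph n) G) (hn : 2 < n) : ∃ v, IsNonbacktracking G n v := by
  obtain ⟨f, hf⟩ := h
  have : Fact (1 < n) := ⟨by omega⟩
  refine ⟨fun i => f i, fun i => by simp, fun i => f.map_adj ?_, fun i => hf.ne ?_⟩
  · simp [cycGraph]
  · rw [Nat.cast_add, Ne, left_eq_add, ZMod.natCast_eq_zero_iff]
    exact Nat.not_dvd_of_pos_of_lt two_pos hn

theorem sum_mul_sub_eq_zero_of_sum_mul_sub_eq_zero {R : Type*} [CommRing R] {m : ℕ} {a b : ℕ → R}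
    (ha : Function.Periodic a m) (hb : Function.Periodic b m)
    (h : ∑ i ∈ range m, b (i + 1) * (a (i + 1) - a i) = 0) :
    ∑ i ∈ range m, a i * (b (i + 1) - b i) = 0 := by
  have htelescope : ∑ i ∈ range m, (a (i + 1) * b (i + 1) - a i * b i) = 0 := by
    rw [sum_range_sub (fun i => a i * b i), ha.eq, hb.eq, sub_self]
  rw [← sub_eq_zero.2 (htelescope.trans h.symm), ← sum_sub_distrib]
  exact sum_congr rfl fun i _ => by ring

theorem sum_sub_eq_zero_of_periodic_two_mul {R : Type*} [AddCommGroup R] {m : ℕ} {g : ℕ → R}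
    (hg : Function.Periodic g (2 * m)) (j : ℕ) :
    ∑ i ∈ range m, (g (2 * i + j + 2) - g (2 * i + j)) = 0 := by
  have hshift (i : ℕ) : 2 * i + j + 2 = 2 * (i + 1) + j := by ring
  simp only [hshift]
  rw [sum_range_sub (fun i => g (2 * i + j)), add_comm, hg, mul_zero, zero_add, sub_self]

section Walk

variable {v : ℕ → (Fin 3 → F) × F × F}

theorem IsNonbacktracking.sum_apply_mul_sub (h : IsNonbacktracking (polarityGraph θ) (2 * m) v)
    (j : ℕ) :
    ∑ i ∈ range m, θ ((v (2 * i + j + 1)).1 0) *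
      ((v (2 * i + j + 2)).1 0 - (v (2 * i + j)).1 0) = 0 := by
  rw [sum_congr rfl fun i _ => apply_mul_sub_of_adj_of_adj (h.adj _) (h.adj _)]
  exact sum_sub_eq_zero_of_periodic_two_mul (h.periodic.comp fun x => x.2.1) j

theorem IsNonbacktracking.sum_apply_mul_sq_sub_sq
    (h : IsNonbacktracking (polarityGraph θ) (2 * m) v) (j : ℕ) :
    ∑ i ∈ range m, θ ((v (2 * i + j + 1)).1 0) *
      ((v (2 * i + j + 2)).1 0 ^ 2 - (v (2 * i + j)).1 0 ^ 2) = 0 := by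
  rw [sum_congr rfl fun i _ => apply_mul_sq_sub_sq_of_adj_of_adj (h.adj _) (h.adj _)]
  exact sum_sub_eq_zero_of_periodic_two_mul
    (h.periodic.comp fun x => -(x.1 2 + x.1 0 * x.2.1)) j

theorem IsNonbacktracking.closedChain (h : IsNonbacktracking (polarityGraph θ) (2 * m) v)
    (hθ : ∀ x, θ (θ x) = x ^ 3) :
    ClosedChain m (fun i => (v (2 * i + 1)).1 0) (fun i => θ ((v (2 * i)).1 0)) := by
  have hodd : Function.Periodic (fun i => (v (2 * i + 1)).1 0) m := fun i => by
    simp only [mul_add, add_right_comm, h.periodic _]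
  have heven : Function.Periodic (fun i => θ ((v (2 * i)).1 0)) m := fun i => by
    simp only [mul_add, h.periodic _]
  have hne (i : ℕ) : (v i).1 0 ≠ (v (i + 2)).1 0 :=
    fst_zero_ne_of_adj_of_adj (h.adj i) (h.adj (i + 1)) (h.ne i)
  refine ⟨hodd, heven, fun i => hne (2 * i + 1), fun i => θ.injective.ne (hne (2 * i)), ?_, ?_⟩
  · intro e he
    interval_cases e
    · simpa using sum_mul_sub_eq_zero_of_sum_mul_sub_eq_zero (a := fun _ => (1 : F))
        (fun _ => rfl) heven (by simp)
    · simpa using sum_mul_sub_eq_zero_of_sum_mul_sub_eq_zero hodd heven (h.sum_apply_mul_sub 1)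
    · exact sum_mul_sub_eq_zero_of_sum_mul_sub_eq_zero (hodd.comp (· ^ 2)) heven
        (h.sum_apply_mul_sq_sub_sq 1)
    · simpa [hθ, mul_add] using congrArg θ (h.sum_apply_mul_sub 0)
  · simpa [hθ, mul_add] using congrArg θ (h.sum_apply_mul_sq_sub_sq 0)

end Walk

theorem evenCycleFree_polarityGraph [CharP F 3] (hθ : ∀ x, θ (θ x) = x ^ 3) :
    EvenCycleFree 5 (polarityGraph θ) := by
  intro m hm hm₅ hcopy
  obtain ⟨v, hv⟩ := hcopy.exists_isNonbacktracking (by omega)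
  exact ((hv.closedChain hθ).five_lt hm).not_ge hm₅

theorem exists_adj_polarityGraph {p q : Fin 3 → F} (hpq : p ≠ q) :
    ∃ s t, (polarityGraph θ).Adj (p, s) (q, t) :=
  let p₃ := θ (q 0) * p 0 + q 1
  let q₃ := θ (p 0) * q 0 + p 1
  ⟨(p₃, q 0 ^ 2 * θ (p 0) + q 2 + q 0 * q₃), (q₃, p 0 ^ 2 * θ (q 0) + p 2 + p 0 * p₃),
    fun h => hpq (congrArg Prod.fst h), ⟨rfl, rfl⟩, rfl, rfl⟩

end PolarityGraph

theorem admitsCompletePartition_of_apply_apply_eq_cube [Finite F] [CharP F 3] (θ : F →+* F)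
    (hθ : ∀ x, θ (θ x) = x ^ 3) : AdmitsCompletePartition 5 (Nat.card F ^ 3) (Nat.card F ^ 2) := by
  have hcolours : Nat.card (Fin 3 → F) = Nat.card F ^ 3 := by simp [Nat.card_fun]
  refine admitsCompletePartition_of_finite (evenCycleFree_polarityGraph hθ)
    (Finite.equivFinOfCardEq hcolours) (c := Prod.fst) (fun p q hpq => ?_) fun p => ?_
  · obtain ⟨s, t, hst⟩ := exists_adj_polarityGraph (θ := θ) hpq
    exact ⟨(p, s), (q, t), rfl, rfl, hst⟩
  · have hfibre : {v : (Fin 3 → F) × F × F | v.1 = p} = Set.range (Prod.mk p) := by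
      ext ⟨p', s⟩
      simp [eq_comm]
    rw [hfibre, ← Set.image_univ, Set.ncard_image_of_injective _ (Prod.mk_right_injective p),
      Set.ncard_univ, Nat.card_prod, sq]

theorem exists_ringHom_apply_apply_eq_pow (p : ℕ) [Fact p.Prime] [Finite F] [CharP F p] {e : ℕ}
    (hF : Nat.card F = p ^ (2 * e + 1)) : ∃ θ : F →+* F, ∀ x, θ (θ x) = x ^ p := by
  have := Fintype.ofFinite F
  refine ⟨iterateFrobenius F p (e + 1), fun x => ?_⟩
  rw [iterateFrobenius_def, iterateFrobenius_def, ← pow_mul, ← pow_add,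
    show e + 1 + (e + 1) = 2 * e + 1 + 1 by ring, pow_succ, pow_mul, ← hF,
    Nat.card_eq_fintype_card, FiniteField.pow_card]

theorem admitsCompletePartition_three_pow (e : ℕ) :
    AdmitsCompletePartition 5 ((3 ^ (2 * e + 1)) ^ 3) ((3 ^ (2 * e + 1)) ^ 2) := by
  have : Fact (Nat.Prime 3) := ⟨Nat.prime_three⟩
  have hcard : Nat.card (GaloisField 3 (2 * e + 1)) = 3 ^ (2 * e + 1) :=
    GaloisField.card 3 _ (by omega)
  obtain ⟨θ, hθ⟩ := exists_ringHom_apply_apply_eq_pow 3 hcard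
  exact hcard ▸ admitsCompletePartition_of_apply_apply_eq_cube θ hθ

end ReeTits

theorem fC4C6C8C10_asymptotics :
    Filter.Tendsto
      (fun e : ℕ =>
        (fC4C6C8C10 (3 ^ (3 * (2 * e + 1))) : ℝ) / (3 ^ (2 * (2 * e + 1)) : ℝ))
      Filter.atTop (nhds 1) := by
  let q (e : ℕ) : ℕ := 3 ^ (2 * e + 1)
  suffices Filter.Tendsto (fun e => (fC4C6C8C10 (q e ^ 3) : ℝ) / (q e : ℝ) ^ 2) .atTop (nhds 1) by
    simpa [q, ← pow_mul, mul_comm] using this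
  have hadmits (e : ℕ) : AdmitsCompletePartition 5 (q e ^ 3) (q e ^ 2) :=
    admitsCompletePartition_three_pow e
  have hlower (e : ℕ) := (hadmits e).admitsCompletePartition_fC4C6C8C10.le_div_sq
    (Nat.one_lt_pow (by omega) (by norm_num)) (hadmits e).fC4C6C8C10_le
  have hupper (e : ℕ) : (fC4C6C8C10 (q e ^ 3) : ℝ) / (q e : ℝ) ^ 2 ≤ 1 :=
    div_le_one_of_le₀ (by exact_mod_cast (hadmits e).fC4C6C8C10_le) (by positivity)
  have hinv : Filter.Tendsto (fun e => (q e : ℝ)⁻¹) .atTop (nhds 0) :=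
    tendsto_inv_atTop_nhds_zero_nat.comp <| (tendsto_pow_atTop_atTop_of_one_lt (by norm_num)).comp
      (Filter.tendsto_atTop_mono (fun e => show e ≤ 2 * e + 1 by omega) Filter.tendsto_id)
  have hlim := ((hinv.const_sub 1).pow 4).mul ((hinv.const_mul 41).const_sub 1)
  rw [sub_zero, one_pow, one_mul, mul_zero, sub_zero] at hlim
  exact tendsto_of_tendsto_of_tendsto_of_le_of_le hlim tendsto_const_nhds hlower hupper
end
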